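/- arXiv:math/0701414 — 2 statements merged into one kernel-verified Lean document; each statement's English description precedes it below -/
import Mathlib

section
/- (Inequality in (1.18)) Let d ≥ 3. There is a constant c depending only on d such that for all N ≥ 2, all j ∈ ℤ, every nonempty subset A of C_j, and every z ∈ (ℤ/Nℤ)^d × {(j−1)N, (j+1)N}: P_z[H_A < T_{B̃_j}] ≤ c |A| / N^{d−1}. -/
open MeasureTheory Filter
open scoped ENNReal Classical

namespace DiscCyl

/-- The lattice `ℤ^{d+1}`. -/
abbrev Lat (d : ℕ) := Fin (d + 1) → ℤ

/-- The discrete cylinder `E = (ℤ/Nℤ)^d × ℤ`. -/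
abbrev Cyl (d N : ℕ) := (Fin d → ZMod N) × ℤ

instance (N : ℕ) : MeasurableSpace (ZMod N) := ⊤

instance (N : ℕ) : Countable (ZMod N) := by
  cases N with
  | zero => exact inferInstanceAs (Countable ℤ)
  | succ n => exact inferInstanceAs (Countable (Fin (n + 1)))

/-- The canonical projection `π_E : ℤ^{d+1} → E`. -/
def projE (d N : ℕ) (v : Lat d) : Cyl d N :=
  (fun i => (v i.castSucc : ZMod N), v (Fin.last d))

/-- The `2(d+1)` unit vectors `±e_i` of `ℤ^{d+1}`. -/
def unitVecs (d : ℕ) : Finset (Lat d) :=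
  Finset.image (fun p : Fin (d + 1) × Bool => Pi.single p.1 (if p.2 then (1 : ℤ) else -1))
    Finset.univ

/-- One-step transition probability of simple random walk on the cylinder:
each of the `2(d+1)` unit moves of `ℤ^{d+1}` is taken with probability `1/(2(d+1))`
and projected to `E`. -/
noncomputable def stepProb (d N : ℕ) (x y : Cyl d N) : ℝ≥0∞ :=
  (((unitVecs d).filter fun e => x + projE d N e = y).card : ℝ≥0∞) / (2 * (d + 1))

/-- `Pl` is the family of laws (indexed by the starting point) of simple random walk
on the cylinder `E = (ℤ/Nℤ)^d × ℤ`. -/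
def IsCylRW (d N : ℕ) (Pl : Cyl d N → Measure (ℕ → Cyl d N)) : Prop :=
  (∀ x, IsProbabilityMeasure (Pl x)) ∧
    ∀ (x : Cyl d N) (n : ℕ) (γ : ℕ → Cyl d N),
      Pl x {ω | ∀ i ≤ n, ω i = γ i} =
        (if γ 0 = x then 1 else 0) * ∏ i ∈ Finset.range n, stepProb d N (γ i) (γ (i + 1))

/-- The lattice `ℤ^ν`. -/
abbrev ZLat (ν : ℕ) := Fin ν → ℤ

/-- Unit vectors of `ℤ^ν`. -/
def zUnitVecs (ν : ℕ) : Set (ZLat ν) :=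
  {v | ∃ i, v = Pi.single i 1 ∨ v = Pi.single i (-1)}

/-- One-step transition probability of simple random walk on `ℤ^ν`. -/
noncomputable def zStep (ν : ℕ) (x y : ZLat ν) : ℝ≥0∞ :=
  if y - x ∈ zUnitVecs ν then (2 * ν : ℝ≥0∞)⁻¹ else 0

/-- `Ql` is the family of laws of simple random walk on `ℤ^ν`. -/
def IsLatRW (ν : ℕ) (Ql : ZLat ν → Measure (ℕ → ZLat ν)) : Prop :=
  (∀ x, IsProbabilityMeasure (Ql x)) ∧
    ∀ (x : ZLat ν) (n : ℕ) (γ : ℕ → ZLat ν),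
      Ql x {ω | ∀ i ≤ n, ω i = γ i} =
        (if γ 0 = x then 1 else 0) * ∏ i ∈ Finset.range n, zStep ν (γ i) (γ (i + 1))

/-- `q(ν)`: the return probability to the origin of simple random walk on `ℤ^ν`. -/
noncomputable def retProb (ν : ℕ) (Ql : ZLat ν → Measure (ℕ → ZLat ν)) : ℝ :=
  ((Ql 0) {ω | ∃ n : ℕ, 1 ≤ n ∧ ω n = 0}).toReal

/-- Entrance time `H_U` (with value `⊤` if `U` is never entered). -/
noncomputable def entT {X : Type*} (U : Set X) (ω : ℕ → X) : ℕ∞ :=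
  sInf {t : ℕ∞ | ∃ n : ℕ, ω n ∈ U ∧ t = n}

/-- Exit time `T_U`. -/
noncomputable def exitT {X : Type*} (U : Set X) (ω : ℕ → X) : ℕ∞ :=
  entT Uᶜ ω

/-- `after t f ω = t + f (θ_t ω)`, with value `⊤` when `t = ⊤`. -/
noncomputable def after {X : Type*} (t : ℕ∞) (f : (ℕ → X) → ℕ∞) (ω : ℕ → X) : ℕ∞ :=
  t.recTopCoe ⊤ fun m => (m : ℕ∞) + f fun k => ω (k + m)

/-- The block `C_j = (ℤ/Nℤ)^d × ([(j-3/4)N, (j+3/4)N] ∩ ℤ)`. -/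
def Cblk (d N : ℕ) (j : ℤ) : Set (Cyl d N) :=
  {x | ((j : ℝ) - 3 / 4) * N ≤ (x.2 : ℝ) ∧ (x.2 : ℝ) ≤ ((j : ℝ) + 3 / 4) * N}

/-- The block `B_j = (ℤ/Nℤ)^d × [(j-1)N, (j+1)N]`. -/
def Bblk (d N : ℕ) (j : ℤ) : Set (Cyl d N) :=
  {x | (j - 1) * (N : ℤ) ≤ x.2 ∧ x.2 ≤ (j + 1) * (N : ℤ)}

/-- The block `B̃_j = (ℤ/Nℤ)^d × [(j-2)N+1, (j+2)N-1]`. -/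
def Btl (d N : ℕ) (j : ℤ) : Set (Cyl d N) :=
  {x | (j - 2) * (N : ℤ) + 1 ≤ x.2 ∧ x.2 ≤ (j + 2) * (N : ℤ) - 1}

/-- `D^j_1`: time of the first departure from `B̃_j` after the first return to `B_j`. -/
noncomputable def oneExc (d N : ℕ) (j : ℤ) (ω : ℕ → Cyl d N) : ℕ∞ :=
  after (entT (Bblk d N j) ω) (exitT (Btl d N j)) ω

/-- `D^j_k`: time of the `k`-th departure from `B̃_j` (after successive returns to `B_j`). -/
noncomputable def DD (d N : ℕ) (j : ℤ) : ℕ → (ℕ → Cyl d N) → ℕ∞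
  | 0, _ => 0
  | k + 1, ω => after (DD d N j k ω) (oneExc d N j) ω

/-- The law `P` of the walk with initial distribution uniform on `B_0`. -/
noncomputable def lawP (d N : ℕ) (Pl : Cyl d N → Measure (ℕ → Cyl d N)) :
    Measure (ℕ → Cyl d N) :=
  ((N : ℝ≥0∞) ^ d * (2 * N + 1))⁻¹ •
    Measure.sum fun x : Cyl d N => if x ∈ Bblk d N 0 then Pl x else 0

/-- Nearest-neighbour adjacency on the cylinder. -/
def adj (d N : ℕ) (x y : Cyl d N) : Prop :=
  x ≠ y ∧ ∃ e ∈ unitVecs d, y = x + projE d N e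

/-- `x` and `y` are connected by a nearest-neighbour path inside `S`. -/
def connIn (d N : ℕ) (S : Set (Cyl d N)) (x y : Cyl d N) : Prop :=
  Relation.ReflTransGen (fun a b => a ∈ S ∧ b ∈ S ∧ adj d N a b) x y

/-- `S` is a connected set. -/
def IsConnIn (d N : ℕ) (S : Set (Cyl d N)) : Prop :=
  ∀ x ∈ S, ∀ y ∈ S, connIn d N S x y

/-- The boundary `∂U`. -/
def bdry (d N : ℕ) (U : Set (Cyl d N)) : Set (Cyl d N) :=
  {x | x ∉ U ∧ ∃ y ∈ U, adj d N x y}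

/-- `ℓ^∞`-norm on `ℤ^{d+1}`. -/
def linf {d : ℕ} (v : Lat d) : ℕ := Finset.univ.sup fun i => (v i).natAbs

/-- `ℓ^∞`-distance induced on the cylinder. -/
noncomputable def cylDist (d N : ℕ) (x y : Cyl d N) : ℕ :=
  sInf {r : ℕ | ∃ v : Lat d, projE d N v = y - x ∧ linf v = r}

/-- `S` has `ℓ^∞`-diameter at least `L`. -/
def diamGE (d N : ℕ) (S : Set (Cyl d N)) (L : ℕ) : Prop :=
  ∃ x ∈ S, ∃ y ∈ S, L ≤ cylDist d N x y

/-- `X_{[0,n]}`: the set of points visited up to time `n`. -/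
def ran {X : Type*} (ω : ℕ → X) (n : ℕ) : Set X := {y | ∃ i ≤ n, ω i = y}

/-- The set of points visited up to the (possibly infinite) time `t`. -/
def ranE {X : Type*} (ω : ℕ → X) (t : ℕ∞) : Set X :=
  {y | ∃ i : ℕ, (i : ℕ∞) ≤ t ∧ ω i = y}

/-- `L_m`: projections to `E` of `m`-dimensional affine coordinate lattices of `ℤ^{d+1}`. -/
def Lcoll (d N m : ℕ) : Set (Set (Cyl d N)) :=
  {F | ∃ I : Finset (Fin (d + 1)), I.card = m ∧ ∃ y : Lat d,
      F = (fun v => projE d N (y + v)) '' {v : Lat d | ∀ i ∉ I, v i = 0}}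

/-- `A^j_m`: nonempty subsets of `C_j` contained in some `F ∈ L_m`. -/
def Adm (d N : ℕ) (j : ℤ) (m : ℕ) : Set (Finset (Cyl d N)) :=
  {A | A.Nonempty ∧ ↑A ⊆ Cblk d N j ∧ ∃ F ∈ Lcoll d N m, (↑A : Set (Cyl d N)) ⊆ F}

/-- The segment `{x + k·e : 0 ≤ k ≤ L}` (addition via `π_E`). -/
def segment (d N : ℕ) (x : Cyl d N) (e : Lat d) (L : ℕ) : Set (Cyl d N) :=
  {y | ∃ k : ℕ, k ≤ L ∧ y = x + projE d N ((k : ℤ) • e)}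

/-- The event `V_{K,j,t}` (with `k = ⌊t⌋` excursions). -/
def Vev (d N : ℕ) (K : ℝ) (j : ℤ) (k : ℕ) : Set (ℕ → Cyl d N) :=
  {ω | ∀ x ∈ Cblk d N j, ∀ e ∈ unitVecs d, ∃ i : ℕ, (i : ℝ) < Real.sqrt N ∧
      ∀ l : ℕ, i ≤ l → l ≤ i + ⌊K * Real.log N⌋₊ →
        x + projE d N ((l : ℤ) • e) ∉ ranE ω (DD d N j k ω)}

/-- The event `U_{K,j,t}` (with `k = ⌊t⌋` excursions). -/
def Uev (d N : ℕ) (K : ℝ) (j : ℤ) (k : ℕ) : Set (ℕ → Cyl d N) :=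
  {ω | ∀ F ∈ Lcoll d N 2, ∀ n : ℕ, (n : ℕ∞) ≤ DD d N j k ω →
      ∀ O₁ O₂ : Set (Cyl d N),
        O₁ ⊆ (F ∩ Cblk d N j) \ ran ω n → O₂ ⊆ (F ∩ Cblk d N j) \ ran ω n →
        IsConnIn d N O₁ → IsConnIn d N O₂ →
        diamGE d N O₁ ⌊K * Real.log N⌋₊ → diamGE d N O₂ ⌊K * Real.log N⌋₊ →
        ∀ p ∈ O₁, ∀ q ∈ O₂, connIn d N ((F ∩ Cblk d N j) \ ran ω n) p q}

/-- A (finite) set `S` disconnects the cylinder. -/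
def Disconnects (d N : ℕ) (S : Set (Cyl d N)) : Prop :=
  S.Finite ∧ ∃ M₀ : ℕ, ∀ M : ℕ, M₀ ≤ M → ∀ x y : Cyl d N,
    (M : ℤ) ≤ x.2 → y.2 ≤ -(M : ℤ) → ¬ connIn d N Sᶜ x y

/-- The disconnection time `T_N`. -/
noncomputable def discT (d N : ℕ) (ω : ℕ → Cyl d N) : ℕ∞ :=
  sInf {t : ℕ∞ | ∃ n : ℕ, Disconnects d N (ran ω n) ∧ t = n}

/-- `r ≤ t` for `t : ℕ∞` and a real threshold `r` (trivially true when `t = ⊤`). -/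
def geReal (t : ℕ∞) (r : ℝ) : Prop := ∀ n : ℕ, t = (n : ℕ∞) → r ≤ n

/-- `r < t` for `t : ℕ∞` and a real threshold `r` (trivially true when `t = ⊤`). -/
def gtReal (t : ℕ∞) (r : ℝ) : Prop := ∀ n : ℕ, t = (n : ℕ∞) → r < n

/-- `φ_j(z) = E_z[exp(λ Σ_{x∈A} 1{H_x < T_{B̃_j}})]`. -/
noncomputable def phi (d N : ℕ) (Pl : Cyl d N → Measure (ℕ → Cyl d N)) (j : ℤ) (lam : ℝ)
    (A : Finset (Cyl d N)) (z : Cyl d N) : ℝ :=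
  ∫ ω, Real.exp (lam * ∑ x ∈ A, if entT {x} ω < exitT (Btl d N j) ω then (1 : ℝ) else 0)
    ∂(Pl z)

/-- `‖φ_j‖_∞`. -/
noncomputable def phiSup (d N : ℕ) (Pl : Cyl d N → Measure (ℕ → Cyl d N)) (j : ℤ) (lam : ℝ)
    (A : Finset (Cyl d N)) : ℝ :=
  ⨆ z : Cyl d N, phi d N Pl j lam A z

/-- `q_N = sup {P_z[H_F < T_{B̃_j}] : F ∈ L_m, z ∈ ∂F}`. -/
noncomputable def qNval (d N m : ℕ) (Pl : Cyl d N → Measure (ℕ → Cyl d N)) (j : ℤ) : ℝ :=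
  sSup {r : ℝ | ∃ F ∈ Lcoll d N m, ∃ z ∈ bdry d N F,
      r = ((Pl z) {ω | entT F ω < exitT (Btl d N j) ω}).toReal}

/-- The times `τ_k`: `τ_0` is the entrance time of `(ℤ/Nℤ)^d × Nℤ`, and `τ_{k+1}` is the
first time after `τ_k` at which the vertical component has moved by exactly `N`. -/
noncomputable def tauT (d N : ℕ) : ℕ → (ℕ → Cyl d N) → ℕ∞
  | 0, ω => entT {x : Cyl d N | (N : ℤ) ∣ x.2} ω
  | k + 1, ω =>
      (tauT d N k ω).recTopCoe ⊤ fun m =>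
        sInf {t : ℕ∞ | ∃ n : ℕ, m < n ∧ ((ω n).2 - (ω m).2).natAbs = N ∧ t = n}

/-- `*`-adjacency on `ℤ²`. -/
def starAdj (x y : ℤ × ℤ) : Prop :=
  x ≠ y ∧ (x.1 - y.1).natAbs ≤ 1 ∧ (x.2 - y.2).natAbs ≤ 1
lemma bern (s x : ℝ) (hs : 0 ≤ s) (hx : -1 < x) : 1 - s * x ≤ (1 + x) ^ (-s) := by
  have h1 : 0 < 1 + x := by linarith
  rw [Real.rpow_def_of_pos h1]
  have h2 := Real.log_le_sub_one_of_pos h1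
  have h3 := Real.add_one_le_exp (Real.log (1 + x) * (-s))
  nlinarith

lemma le_of_second_deriv {b : ℝ} {f f' f'' g g' g'' : ℝ → ℝ}
    (hf : ∀ x ∈ Set.Icc 0 b, HasDerivAt f (f' x) x)
    (hf' : ∀ x ∈ Set.Icc 0 b, HasDerivAt f' (f'' x) x)
    (hg : ∀ x, HasDerivAt g (g' x) x)
    (hg' : ∀ x, HasDerivAt g' (g'' x) x)
    (h0 : f 0 ≤ g 0) (h1 : f' 0 ≤ g' 0) (h2 : ∀ x ∈ Set.Icc 0 b, f'' x ≤ g'' x) :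
    ∀ x ∈ Set.Icc 0 b, f x ≤ g x := by
  have key : ∀ x ∈ Set.Icc 0 b, f' x ≤ g' x := by
    intro x hx
    refine image_le_of_deriv_right_le_deriv_boundary (f := f') (f' := f'') (B := g') (B' := g'')
      (a := 0) (b := b) ?_ ?_ h1 ?_ ?_ ?_ hx
    · exact fun x hx => (hf' x hx).continuousAt.continuousWithinAt
    · exact fun x hx => (hf' x ⟨hx.1, hx.2.le⟩).hasDerivWithinAt
    · exact fun x hx => (hg' x).continuousAt.continuousWithinAt
    · exact fun x hx => (hg' x).hasDerivWithinAt
    · exact fun x hx => h2 x ⟨hx.1, hx.2.le⟩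
  intro x hx
  refine image_le_of_deriv_right_le_deriv_boundary (f := f) (f' := f') (B := g) (B' := g')
      (a := 0) (b := b) ?_ ?_ h0 ?_ ?_ ?_ hx
  · exact fun x hx => (hf x hx).continuousAt.continuousWithinAt
  · exact fun x hx => (hf x ⟨hx.1, hx.2.le⟩).hasDerivWithinAt
  · exact fun x hx => (hg x).continuousAt.continuousWithinAt
  · exact fun x hx => (hg x).hasDerivWithinAt
  · exact fun x hx => key x ⟨hx.1, hx.2.le⟩

lemma hd_plus (t x : ℝ) (hx : 0 < 1 + x) :
    HasDerivAt (fun x : ℝ => (1 + x) ^ (-t)) (-t * (1 + x) ^ (-(t + 1))) x := by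
  have h := ((hasDerivAt_id x).const_add 1).rpow_const (p := -t) (Or.inl hx.ne')
  simp only [id] at h
  convert h using 1
  rw [show -t - 1 = -(t + 1) by ring]; ring_nf

lemma hd_minus (t x : ℝ) (hx : 0 < 1 - x) :
    HasDerivAt (fun x : ℝ => (1 - x) ^ (-t)) (t * (1 - x) ^ (-(t + 1))) x := by
  have h := ((hasDerivAt_id x).const_sub 1).rpow_const (p := -t) (Or.inl hx.ne')
  simp only [id] at h
  convert h using 1
  rw [show -t - 1 = -(t + 1) by ring]; ring_nf

lemma even_quad (t : ℝ) (ht : 0 < t) : ∃ K : ℝ, 0 ≤ K ∧ ∀ x ∈ Set.Icc (0 : ℝ) (1 / 2),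
    (1 + x) ^ (-t) + (1 - x) ^ (-t) ≤ 2 + K * x ^ 2 := by
  set M : ℝ := 1 + (1 / 2 : ℝ) ^ (-(t + 1 + 1)) with hM
  have hMpos : 0 ≤ M := by positivity
  refine ⟨t * (t + 1) * M / 2, by positivity, ?_⟩
  refine le_of_second_deriv
    (f' := fun x => -t * (1 + x) ^ (-(t + 1)) + t * (1 - x) ^ (-(t + 1)))
    (f'' := fun x => -t * (-(t + 1) * (1 + x) ^ (-(t + 1 + 1)))
      + t * ((t + 1) * (1 - x) ^ (-(t + 1 + 1))))
    (g' := fun x => t * (t + 1) * M * x) (g'' := fun _ => t * (t + 1) * M) ?_ ?_ ?_ ?_ ?_ ?_ ?_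
  · intro x hx
    exact (hd_plus t x (by linarith [hx.1])).add (hd_minus t x (by linarith [hx.2]))
  · intro x hx
    exact ((hd_plus (t + 1) x (by linarith [hx.1])).const_mul _).add
      ((hd_minus (t + 1) x (by linarith [hx.2])).const_mul _)
  · intro x
    have := ((hasDerivAt_pow 2 x).const_mul (t * (t + 1) * M / 2)).const_add 2
    refine this.congr_deriv ?_
    simp only [Nat.cast_ofNat, Nat.reduceSub]; ring
  · intro x
    simpa using (hasDerivAt_id x).const_mul (t * (t + 1) * M)
  · norm_num
  · norm_num
  · intro x hx
    have h1 : (1 + x) ^ (-(t + 1 + 1)) ≤ 1 :=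
      Real.rpow_le_one_of_one_le_of_nonpos (by linarith [hx.1]) (by linarith)
    have h2 : (1 - x) ^ (-(t + 1 + 1)) ≤ (1 / 2 : ℝ) ^ (-(t + 1 + 1)) :=
      Real.rpow_le_rpow_of_nonpos (by norm_num) (by linarith [hx.2]) (by linarith)
    have : t * (t + 1) * ((1 + x) ^ (-(t + 1 + 1)) + (1 - x) ^ (-(t + 1 + 1)))
        ≤ t * (t + 1) * M := by
      apply mul_le_mul_of_nonneg_left _ (by positivity)
      linarith
    linarith

lemma even_quart (s : ℝ) (hs : 0 < s) : ∃ K : ℝ, 0 ≤ K ∧ ∀ x : ℝ, |x| ≤ 1 / 2 →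
    (1 + x) ^ (-s) + (1 - x) ^ (-s) ≤ 2 + s * (s + 1) * x ^ 2 + K * x ^ 4 := by
  obtain ⟨K, hK, h⟩ := even_quad (s + 1 + 1) (by positivity)
  refine ⟨s * (s + 1) * K / 12, by positivity, ?_⟩
  have main : ∀ x ∈ Set.Icc (0 : ℝ) (1 / 2), (1 + x) ^ (-s) + (1 - x) ^ (-s)
      ≤ 2 + s * (s + 1) * x ^ 2 + s * (s + 1) * K / 12 * x ^ 4 := by
    refine le_of_second_deriv
      (f' := fun x => -s * (1 + x) ^ (-(s + 1)) + s * (1 - x) ^ (-(s + 1)))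
      (f'' := fun x => -s * (-(s + 1) * (1 + x) ^ (-(s + 1 + 1)))
        + s * ((s + 1) * (1 - x) ^ (-(s + 1 + 1))))
      (g' := fun x => s * (s + 1) * (2 * x) + s * (s + 1) * K / 12 * (4 * x ^ 3))
      (g'' := fun x => s * (s + 1) * 2 + s * (s + 1) * K / 12 * (12 * x ^ 2)) ?_ ?_ ?_ ?_ ?_ ?_ ?_
    · intro x hx
      exact (hd_plus s x (by linarith [hx.1])).add (hd_minus s x (by linarith [hx.2]))
    · intro x hx
      exact ((hd_plus (s + 1) x (by linarith [hx.1])).const_mul _).add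
        ((hd_minus (s + 1) x (by linarith [hx.2])).const_mul _)
    · intro x
      have := (((hasDerivAt_pow 2 x).const_mul (s * (s + 1))).const_add 2).add
        ((hasDerivAt_pow 4 x).const_mul (s * (s + 1) * K / 12))
      refine this.congr_deriv ?_
      norm_num
    · intro x
      have := (((hasDerivAt_id x).const_mul 2).const_mul (s * (s + 1))).add
        (((hasDerivAt_pow 3 x).const_mul 4).const_mul (s * (s + 1) * K / 12))
      refine this.congr_deriv ?_
      simp only [Nat.cast_ofNat, Nat.reduceSub]; ring
    · norm_num
    · norm_num
    · intro x hx
      have h1 := h x hx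
      have := mul_le_mul_of_nonneg_left h1 (show 0 ≤ s * (s + 1) by positivity)
      linarith
  intro x hx
  rcases le_total 0 x with h0 | h0
  · exact main x ⟨h0, (abs_le.1 hx).2⟩
  · have := main (-x) ⟨by linarith, by linarith [(abs_le.1 hx).1]⟩
    rw [← sub_eq_add_neg, sub_neg_eq_add] at this
    rw [show (-x) ^ 2 = x ^ 2 by ring, show (-x) ^ 4 = x ^ 4 by ring] at this
    linarith

/-- The regularised Newtonian potential is superharmonic on the lattice. -/
lemma superharm (n : ℕ) (hn : 3 ≤ n) (s : ℝ) (hs : 2 * (s + 1) = n) : ∃ a : ℝ, 4 ≤ a ∧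
    ∀ (v : Fin n → ℝ) (ρ : ℝ), ρ = ∑ i, v i ^ 2 + a →
      ∑ i, ((ρ + 1 + 2 * v i) ^ (-s) + (ρ + 1 - 2 * v i) ^ (-s)) ≤ 2 * n * ρ ^ (-s) := by
  have hn' : (3 : ℝ) ≤ n := by exact_mod_cast hn
  have hspos : 0 < s := by linarith
  obtain ⟨K, hK, hKx⟩ := even_quart s hspos
  refine ⟨4 + 8 * K / (n * s), by have : 0 ≤ 8 * K / (n * s) := by positivity
                                  linarith, ?_⟩
  intro v ρ hρ
  set a : ℝ := 4 + 8 * K / (n * s) with ha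
  have haK : 8 * K ≤ n * s * a := by
    rw [ha]; field_simp; nlinarith [mul_pos (show (0:ℝ) < n by linarith) hspos]
  have ha4 : 4 ≤ a := by
    have : 0 ≤ 8 * K / (n * s) := by positivity
    linarith
  set r : ℝ := ∑ i, v i ^ 2 with hr
  have hr0 : 0 ≤ r := Finset.sum_nonneg fun i _ => sq_nonneg _
  have hvr : ∀ i, v i ^ 2 ≤ r := fun i =>
    Finset.single_le_sum (f := fun i => v i ^ 2) (fun i _ => sq_nonneg _) (Finset.mem_univ i)
  set σ : ℝ := ρ + 1 with hσ
  have hσpos : 0 < σ := by linarith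
  have hterm : ∀ i, (σ + 2 * v i) ^ (-s) + (σ - 2 * v i) ^ (-s)
      ≤ σ ^ (-s) * (2 + s * (s + 1) * (4 / σ ^ 2) * v i ^ 2 + K * (16 / σ ^ 4 * r) * v i ^ 2) := by
    intro i
    have hb : |2 * v i / σ| ≤ 1 / 2 := by
      rw [abs_div, abs_of_pos hσpos, div_le_iff₀ hσpos, abs_le]
      have := hvr i
      constructor <;> nlinarith [sq_nonneg (v i - 2), sq_nonneg (v i + 2)]
    have h1 := hKx _ hb
    have hb' := abs_le.1 hb
    rw [show σ + 2 * v i = σ * (1 + 2 * v i / σ) by field_simp,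
      show σ - 2 * v i = σ * (1 - 2 * v i / σ) by field_simp,
      Real.mul_rpow hσpos.le (by linarith), Real.mul_rpow hσpos.le (by linarith), ← mul_add]
    refine mul_le_mul_of_nonneg_left (h1.trans ?_) (by positivity)
    have h4 : v i ^ 4 ≤ r * v i ^ 2 := by nlinarith [hvr i, sq_nonneg (v i)]
    have e1 : (2 * v i / σ) ^ 2 = 4 / σ ^ 2 * v i ^ 2 := by ring
    have e2 : (2 * v i / σ) ^ 4 = 16 / σ ^ 4 * v i ^ 4 := by ring
    rw [e1, e2]
    have : K * (16 / σ ^ 4 * v i ^ 4) ≤ K * (16 / σ ^ 4 * (r * v i ^ 2)) := by gcongr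
    linarith
  refine (Finset.sum_le_sum fun i _ => hterm i).trans ?_
  rw [← Finset.mul_sum, Finset.sum_add_distrib, Finset.sum_add_distrib, ← Finset.mul_sum,
    ← Finset.mul_sum, ← hr]
  simp only [Finset.sum_const, Finset.card_univ, Fintype.card_fin, nsmul_eq_mul]
  have hb := bern s (-(1 / σ)) hspos.le (by
    have : 1 / σ < 1 := by rw [div_lt_one hσpos]; linarith
    linarith)
  have hρe : ρ ^ (-s) = σ ^ (-s) * (1 + -(1 / σ)) ^ (-s) := by
    have : 1 / σ < 1 := by rw [div_lt_one hσpos]; linarith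
    rw [← Real.mul_rpow hσpos.le (by linarith)]
    congr 1; field_simp; simp [hσ]
  rw [hρe]
  have hpos : 0 ≤ σ ^ (-s) := by positivity
  have key : n * 2 + s * (s + 1) * (4 / σ ^ 2) * r + K * (16 / σ ^ 4 * r) * r
      ≤ 2 * n * (1 - s * -(1 / σ)) := by
    have e : s * (s + 1) * (4 / σ ^ 2) * r = 2 * n * s * r / σ ^ 2 := by
      rw [← hs]; ring
    rw [e]
    have h1 : K * (16 / σ ^ 4 * r) * r ≤ 16 * K / σ ^ 2 := by
      have : r ^ 2 ≤ σ ^ 2 := by gcongr; linarith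
      rw [show K * (16 / σ ^ 4 * r) * r = 16 * K / σ ^ 4 * r ^ 2 by ring]
      calc 16 * K / σ ^ 4 * r ^ 2 ≤ 16 * K / σ ^ 4 * σ ^ 2 := by gcongr
        _ = 16 * K / σ ^ 2 := by field_simp
    have h2 : 2 * n * s * r / σ ^ 2 + 16 * K / σ ^ 2 ≤ 2 * n * s * (1 / σ) := by
      rw [← add_div, div_le_iff₀ (by positivity)]
      have : 2 * n * s * (1 / σ) * σ ^ 2 = 2 * n * s * σ := by field_simp
      rw [this]
      have : σ = r + a + 1 := by rw [hσ, hρ]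
      rw [this]
      have : 0 ≤ n * s := by positivity
      nlinarith
    linarith
  calc _ ≤ σ ^ (-s) * (2 * n * (1 - s * -(1 / σ))) := mul_le_mul_of_nonneg_left key hpos
    _ ≤ σ ^ (-s) * (2 * n * (1 + -(1 / σ)) ^ (-s)) := by gcongr
    _ = _ := by ring

/-- squared norm plus `a`. -/
noncomputable def rho {n : ℕ} (a : ℝ) (v : Fin n → ℤ) : ℝ := ∑ i, (v i : ℝ) ^ 2 + a

/-- convex profile with a second order zero at `R`. -/
noncomputable def Gf (s R ρ : ℝ) : ℝ := ρ ^ (-s) - R ^ (-s) + s * R ^ (-(s + 1)) * (ρ - R)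

/-- truncated potential. -/
noncomputable def Ff {n : ℕ} (a s R : ℝ) (v : Fin n → ℤ) : ℝ :=
  if rho a v ≤ R then Gf s R (rho a v) else 0

lemma Gf_eq (s R u : ℝ) (hR : 0 < R) (hu : 0 < u) :
    Gf s R (R * u) = R ^ (-s) * (u ^ (-s) - 1 + s * (u - 1)) := by
  unfold Gf
  rw [Real.mul_rpow hR.le hu.le, neg_add, Real.rpow_add hR, Real.rpow_neg_one]
  field_simp

lemma Gf_nonneg (s R ρ : ℝ) (hs : 0 ≤ s) (hR : 0 < R) (hρ : 0 < ρ) : 0 ≤ Gf s R ρ := by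
  have h := Gf_eq s R (ρ / R) hR (by positivity)
  rw [mul_div_cancel₀ _ hR.ne'] at h
  rw [h]
  have hu : 0 < ρ / R := by positivity
  have := bern s (ρ / R - 1) hs (by linarith)
  rw [add_sub_cancel] at this
  have : 0 ≤ (ρ / R) ^ (-s) - 1 + s * (ρ / R - 1) := by linarith
  positivity

lemma rho_pos {n : ℕ} {a : ℝ} (ha : 0 < a) (v : Fin n → ℤ) : 0 < rho a v := by
  unfold rho
  have : 0 ≤ ∑ i, (v i : ℝ) ^ 2 := Finset.sum_nonneg fun i _ => sq_nonneg _
  linarith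

lemma Ff_nonneg {n : ℕ} (a s R : ℝ) (hs : 0 ≤ s) (hR : 0 < R) (ha : 0 < a) (v : Fin n → ℤ) :
    0 ≤ Ff a s R v := by
  unfold Ff; split_ifs
  · exact Gf_nonneg s R _ hs hR (rho_pos ha v)
  · exact le_rfl

lemma rho_single {n : ℕ} (a : ℝ) (v : Fin n → ℤ) (i : Fin n) (c : ℤ) :
    rho a (v + Pi.single i c) = rho a v + (c : ℝ) ^ 2 + 2 * c * v i := by
  unfold rho
  have : ∀ k, (((v + Pi.single i c : Fin n → ℤ) k : ℤ) : ℝ) ^ 2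
      = (v k : ℝ) ^ 2 + if k = i then (c : ℝ) ^ 2 + 2 * c * v i else 0 := by
    intro k
    by_cases hk : k = i
    · subst hk; simp; ring
    · simp [hk]
  simp only [this, Finset.sum_add_distrib, Finset.sum_ite_eq', Finset.mem_univ, if_true]
  ring

lemma sq_le_rho {n : ℕ} (a : ℝ) (ha : 0 < a) (v : Fin n → ℤ) (i : Fin n) :
    (v i : ℝ) ^ 2 ≤ rho a v := by
  unfold rho
  have := Finset.single_le_sum (f := fun i => (v i : ℝ) ^ 2) (fun i _ => sq_nonneg _)
    (Finset.mem_univ i)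
  linarith

lemma Gf_near (s : ℝ) (hs : 0 < s) : ∃ C : ℝ, 0 ≤ C ∧ ∀ Q ρ : ℝ, 6 ≤ Q → ρ ≤ Q ^ 2 →
    Q ^ 2 - 3 * Q ≤ ρ → Gf s (Q ^ 2) ρ ≤ C * (Q ^ 2) ^ (-(s + 1)) := by
  obtain ⟨K, hK, h⟩ := even_quart s hs
  refine ⟨9 * (s * (s + 1) + K), by positivity, ?_⟩
  intro Q ρ hQ h1 h2
  have hQ0 : 0 < Q := by linarith
  have hQ2 : 0 < Q ^ 2 := by positivity
  set x : ℝ := 1 - ρ / Q ^ 2 with hx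
  have hx0 : 0 ≤ x := by
    have : ρ / Q ^ 2 ≤ 1 := by rw [div_le_one hQ2]; exact h1
    linarith
  have hx3 : x ≤ 3 / Q := by
    have : 1 - 3 / Q ≤ ρ / Q ^ 2 := by
      rw [le_div_iff₀ hQ2]
      have : (1 - 3 / Q) * Q ^ 2 = Q ^ 2 - 3 * Q := by field_simp
      linarith
    linarith
  have hx2 : x ≤ 1 / 2 := by
    refine hx3.trans ?_
    rw [div_le_div_iff₀ hQ0 (by norm_num)]; linarith
  have e : ρ = Q ^ 2 * (1 - x) := by rw [hx]; field_simp; ring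
  rw [e, Gf_eq _ _ _ hQ2 (by linarith), neg_add, Real.rpow_add hQ2, Real.rpow_neg_one,
    mul_left_comm]
  refine mul_le_mul_of_nonneg_left ?_ (by positivity)
  have hb := bern s x hs.le (by linarith)
  have hh := h x (by rw [abs_of_nonneg hx0]; exact hx2)
  have hxs : x ^ 2 ≤ 9 * (Q ^ 2)⁻¹ := by
    calc x ^ 2 ≤ (3 / Q) ^ 2 := by gcongr
      _ = _ := by ring
  have hx4 : x ^ 4 ≤ x ^ 2 := by
    have : x ^ 2 ≤ 1 := by nlinarith
    nlinarith [sq_nonneg x]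
  have : (s * (s + 1) + K) * x ^ 2 ≤ (s * (s + 1) + K) * (9 * (Q ^ 2)⁻¹) := by gcongr
  nlinarith

lemma Ff_step (n : ℕ) (hn : 3 ≤ n) (s : ℝ) (hs : 2 * (s + 1) = n) : ∃ a C : ℝ, 4 ≤ a ∧ 0 < C ∧
    ∀ (Q : ℝ), 6 ≤ Q → ∀ v : Fin n → ℤ,
      ∑ i, (Ff a s (Q ^ 2) (v + Pi.single i 1) + Ff a s (Q ^ 2) (v + Pi.single i (-1)))
        ≤ 2 * n * Ff a s (Q ^ 2) v + 2 * n * (C * (Q ^ 2) ^ (-(s + 1))) := by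
  have hn' : (3 : ℝ) ≤ n := by exact_mod_cast hn
  have hspos : 0 < s := by linarith
  obtain ⟨a, ha, hsup⟩ := superharm n hn s hs
  obtain ⟨C, hC, hnear⟩ := Gf_near s hspos
  refine ⟨a, s + C, ha, by positivity, ?_⟩
  intro Q hQ v
  have hQ2 : 0 < Q ^ 2 := by positivity
  have ha0 : 0 < a := by linarith
  set R := Q ^ 2 with hR
  have hRp : 0 < R ^ (-(s + 1)) := by positivity
  by_cases hv : rho a v ≤ R
  · have hle : ∀ w : Fin n → ℤ, Ff a s R w ≤ Gf s R (rho a w) := by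
      intro w; unfold Ff; split_ifs
      · exact le_rfl
      · exact Gf_nonneg s R _ hspos.le hQ2 (rho_pos ha0 w)
    have hsv := hsup (fun i => (v i : ℝ)) (rho a v) rfl
    calc _ ≤ ∑ i, (Gf s R (rho a v + 1 + 2 * v i) + Gf s R (rho a v + 1 - 2 * v i)) := by
          refine Finset.sum_le_sum fun i _ => ?_
          have h1 := hle (v + Pi.single i 1)
          have h2 := hle (v + Pi.single i (-1))
          rw [rho_single] at h1 h2
          push_cast at h1 h2
          refine add_le_add (h1.trans_eq ?_) (h2.trans_eq ?_) <;> congr 1 <;> ring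
      _ = ∑ i, ((rho a v + 1 + 2 * v i) ^ (-s) + (rho a v + 1 - 2 * v i) ^ (-s))
          + 2 * n * (- R ^ (-s) + s * R ^ (-(s + 1)) * (rho a v + 1 - R)) := by
          have : ∀ i, Gf s R (rho a v + 1 + 2 * v i) + Gf s R (rho a v + 1 - 2 * v i)
            = ((rho a v + 1 + 2 * v i) ^ (-s) + (rho a v + 1 - 2 * v i) ^ (-s))
              + 2 * (- R ^ (-s) + s * R ^ (-(s + 1)) * (rho a v + 1 - R)) := by
            intro i; unfold Gf; ring
          simp only [this]
          rw [Finset.sum_add_distrib]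
          simp only [Finset.sum_const, Finset.card_univ, Fintype.card_fin, nsmul_eq_mul]
          ring
      _ ≤ 2 * n * Gf s R (rho a v) + 2 * n * (s * R ^ (-(s + 1))) := by
          unfold Gf
          linarith
      _ ≤ _ := by
          have : Ff a s R v = Gf s R (rho a v) := by unfold Ff; rw [if_pos hv]
          rw [this]
          gcongr
          linarith
  · have h0 : Ff a s R v = 0 := by unfold Ff; rw [if_neg hv]
    push Not at hv
    have hone : ∀ i, ∀ c : ℤ, (c = 1 ∨ c = -1) →
        Ff a s R (v + Pi.single i c) ≤ (s + C) * R ^ (-(s + 1)) := by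
      intro i c hc
      unfold Ff
      split_ifs with h
      · refine (hnear Q _ hQ h ?_).trans (by rw [← hR]; gcongr; linarith)
        have hsq := sq_le_rho a ha0 (v + Pi.single i c) i
        have h3 : ((v + Pi.single i c : Fin n → ℤ) i : ℤ) = v i + c := by simp
        rw [h3] at hsq
        push_cast at hsq
        have hab : |(v i : ℝ) + c| ≤ Q := abs_le_of_sq_le_sq (hsq.trans h) (by linarith)
        have := abs_le.1 hab
        rw [rho_single]
        rcases hc with rfl | rfl <;> push_cast at * <;> nlinarith
      · positivity
    rw [h0, mul_zero, zero_add]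
    calc _ ≤ ∑ i : Fin n, 2 * ((s + C) * R ^ (-(s + 1))) := by
          refine Finset.sum_le_sum fun i _ => ?_
          linarith [hone i 1 (Or.inl rfl), hone i (-1) (Or.inr rfl)]
      _ = _ := by
          simp only [Finset.sum_const, Finset.card_univ, Fintype.card_fin, nsmul_eq_mul]
          ring

lemma Ff_zero_lb {n : ℕ} (s a : ℝ) (hs : 0 < s) (ha : 0 < a) : ∃ Q0 c0 : ℝ, 0 < c0 ∧
    ∀ Q : ℝ, Q0 ≤ Q → 0 < Q → c0 ≤ Ff a s (Q ^ 2) (0 : Fin n → ℤ) := by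
  have hlim : Tendsto (fun Q : ℝ => (1 + s) * (Q ^ 2) ^ (-s)) atTop (nhds ((1 + s) * 0)) :=
    ((tendsto_rpow_neg_atTop hs).comp (tendsto_pow_atTop (by norm_num))).const_mul _
  rw [mul_zero] at hlim
  have hap : 0 < a ^ (-s) / 2 := by positivity
  have h1 := (hlim.eventually (gt_mem_nhds hap)).and
    ((tendsto_pow_atTop (α := ℝ) (n := 2) (by norm_num)).eventually_ge_atTop a)
  obtain ⟨Q0, hQ0⟩ := eventually_atTop.1 h1
  refine ⟨Q0, a ^ (-s) / 2, hap, ?_⟩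
  intro Q hQ hQp
  obtain ⟨h2, h3⟩ := hQ0 Q hQ
  have hr : rho a (0 : Fin n → ℤ) = a := by simp [rho]
  unfold Ff
  rw [hr, if_pos h3]
  unfold Gf
  have hQ2 : 0 < Q ^ 2 := by positivity
  have e : (Q ^ 2) ^ (-(s + 1)) * Q ^ 2 = (Q ^ 2) ^ (-s) := by
    rw [neg_add, Real.rpow_add hQ2, Real.rpow_neg_one]; field_simp
  have : 0 ≤ s * (Q ^ 2) ^ (-(s + 1)) * a := by positivity
  nlinarith

/-- The path agrees with `γ` up to time `m`. -/
def pre {X : Type*} (γ : ℕ → X) (m : ℕ) : Set (ℕ → X) := {ω | ∀ i ≤ m, ω i = γ i}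

/-- hitting `A` at some time in `[m, m+k]` while staying in `B` since time `m`. -/
def hitEv {X : Type*} (A B : Set X) (m k : ℕ) : Set (ℕ → X) :=
  {ω | ∃ t ≤ k, ω (m + t) ∈ A ∧ ∀ i ≤ t, ω (m + i) ∈ B}

lemma pre_step (d N : ℕ) (Pl : Cyl d N → Measure (ℕ → Cyl d N)) (hP : IsCylRW d N Pl)
    (z : Cyl d N) (γ : ℕ → Cyl d N) (m : ℕ) (y : Cyl d N) :
    Pl z (pre (Function.update γ (m + 1) y) (m + 1))
      = Pl z (pre γ m) * stepProb d N (γ m) y := by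
  unfold pre
  rw [hP.2, hP.2, Finset.prod_range_succ, mul_assoc]
  have h0 : Function.update γ (m + 1) y 0 = γ 0 := by simp
  rw [h0]
  congr 1
  congr 1
  · refine Finset.prod_congr rfl fun i hi => ?_
    have hi := Finset.mem_range.1 hi
    rw [Function.update_of_ne (by omega), Function.update_of_ne (by omega)]
  · rw [Function.update_of_ne (by omega), Function.update_self]

lemma markov_bound (d N : ℕ) (Pl : Cyl d N → Measure (ℕ → Cyl d N)) (hP : IsCylRW d N Pl)
    (A B : Set (Cyl d N)) (H : Cyl d N → ℝ≥0∞) (hA : ∀ x ∈ A, x ∈ B → 1 ≤ H x)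
    (hH : ∀ x ∈ B, ∑' y, stepProb d N x y * H y ≤ H x) (z : Cyl d N) (k : ℕ) :
    ∀ (m : ℕ) (γ : ℕ → Cyl d N),
      Pl z (pre γ m ∩ hitEv A B m k) ≤ Pl z (pre γ m) * H (γ m) := by
  induction k with
  | zero =>
    intro m γ
    by_cases h : γ m ∈ A ∧ γ m ∈ B
    · calc _ ≤ Pl z (pre γ m) := measure_mono Set.inter_subset_left
        _ ≤ _ := le_mul_of_one_le_right' (hA _ h.1 h.2)
    · have : pre γ m ∩ hitEv A B m 0 = ∅ := by
        ext ω
        simp only [Set.mem_inter_iff, Set.mem_empty_iff_false, iff_false, not_and]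
        rintro hω ⟨t, ht, h1, h2⟩
        obtain rfl : t = 0 := by omega
        have h3 := hω m le_rfl
        have h4 := h2 0 le_rfl
        simp only [add_zero] at h1 h4
        rw [h3] at h1 h4
        exact h ⟨h1, h4⟩
      rw [this]; simp
  | succ k ih =>
    intro m γ
    by_cases hB : γ m ∈ B
    · by_cases hAm : γ m ∈ A
      · calc _ ≤ Pl z (pre γ m) := measure_mono Set.inter_subset_left
          _ ≤ _ := le_mul_of_one_le_right' (hA _ hAm hB)
      · have hsub : pre γ m ∩ hitEv A B m (k + 1) ⊆
            ⋃ y, (pre (Function.update γ (m + 1) y) (m + 1) ∩ hitEv A B (m + 1) k) := by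
          rintro ω ⟨hω, t, ht, h1, h2⟩
          refine Set.mem_iUnion.2 ⟨ω (m + 1), ?_, ?_⟩
          · intro i hi
            by_cases him : i = m + 1
            · subst him; simp
            · rw [Function.update_of_ne him]; exact hω i (by omega)
          · cases t with
            | zero =>
              exfalso
              rw [add_zero, hω m le_rfl] at h1
              exact hAm h1
            | succ t =>
              refine ⟨t, by omega, ?_, ?_⟩
              · rwa [show m + 1 + t = m + (t + 1) by ring]
              · intro i hi
                have := h2 (i + 1) (by omega)
                rwa [show m + 1 + i = m + (i + 1) by ring]
        calc _ ≤ ∑' y, Pl z (pre (Function.update γ (m + 1) y) (m + 1) ∩ hitEv A B (m + 1) k) :=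
              (measure_mono hsub).trans (measure_iUnion_le _)
          _ ≤ ∑' y, Pl z (pre γ m) * (stepProb d N (γ m) y * H y) := by
              refine ENNReal.tsum_le_tsum fun y => ?_
              have := ih (m + 1) (Function.update γ (m + 1) y)
              rw [pre_step d N Pl hP, Function.update_self, mul_assoc] at this
              exact this
          _ = Pl z (pre γ m) * ∑' y, stepProb d N (γ m) y * H y := ENNReal.tsum_mul_left
          _ ≤ _ := by gcongr; exact hH _ hB
    · have : pre γ m ∩ hitEv A B m (k + 1) = ∅ := by
        ext ω
        simp only [Set.mem_inter_iff, Set.mem_empty_iff_false, iff_false, not_and]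
        rintro hω ⟨t, ht, h1, h2⟩
        have h4 := h2 0 (by omega)
        rw [add_zero, hω m le_rfl] at h4
        exact hB h4
      rw [this]; simp

lemma hit_bound (d N : ℕ) (Pl : Cyl d N → Measure (ℕ → Cyl d N)) (hP : IsCylRW d N Pl)
    (A B : Set (Cyl d N)) (H : Cyl d N → ℝ≥0∞) (hA : ∀ x ∈ A, x ∈ B → 1 ≤ H x)
    (hH : ∀ x ∈ B, ∑' y, stepProb d N x y * H y ≤ H x) (z : Cyl d N) :
    Pl z {ω | entT A ω < exitT B ω} ≤ H z := by
  have hk : ∀ k, Pl z (hitEv A B 0 k) ≤ H z := by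
    intro k
    have hsub : hitEv A B 0 k ⊆ ⋃ y : Cyl d N, (pre (fun _ => y) 0 ∩ hitEv A B 0 k) := by
      intro ω hω
      refine Set.mem_iUnion.2 ⟨ω 0, ?_, hω⟩
      intro i hi
      obtain rfl : i = 0 := by omega
      rfl
    calc _ ≤ ∑' y : Cyl d N, Pl z (pre (fun _ => y) 0 ∩ hitEv A B 0 k) :=
          (measure_mono hsub).trans (measure_iUnion_le _)
      _ ≤ ∑' y : Cyl d N, (if y = z then H z else 0) := by
          refine ENNReal.tsum_le_tsum fun y => ?_
          refine (markov_bound d N Pl hP A B H hA hH z k 0 (fun _ => y)).trans ?_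
          unfold pre
          rw [hP.2]
          by_cases h : y = z
          · simp [h]
          · simp [h]
      _ = H z := tsum_ite_eq _ _
  have hmono : Monotone fun k => hitEv A B 0 k := by
    rintro k l hkl ω ⟨t, ht, h⟩
    exact ⟨t, ht.trans hkl, h⟩
  have hsub : {ω | entT A ω < exitT B ω} ⊆ ⋃ k, hitEv A B 0 k := by
    intro ω hω
    obtain ⟨_, ⟨n, hn, rfl⟩, hlt⟩ := sInf_lt_iff.1 (show entT A ω < exitT B ω from hω)
    refine Set.mem_iUnion.2 ⟨n, n, le_rfl, by simpa using hn, ?_⟩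
    intro i hi
    by_contra hcon
    have : exitT B ω ≤ i := sInf_le ⟨i, by simpa using hcon, rfl⟩
    have h2 := hlt.trans_le this
    have : n < i := by exact_mod_cast h2
    omega
  refine (measure_mono hsub).trans ?_
  rw [hmono.measure_iUnion]
  exact iSup_le hk

lemma sum_unitVecs {M : Type*} [AddCommMonoid M] (d : ℕ) (f : Lat d → M) :
    ∑ e ∈ unitVecs d, f e = ∑ i, (f (Pi.single i 1) + f (Pi.single i (-1))) := by
  unfold unitVecs
  rw [Finset.sum_image, Fintype.sum_prod_type]
  · simp
  · rintro ⟨i, b⟩ - ⟨k, c⟩ - h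
    have h1 := congrFun h i
    simp only [Pi.single_apply, if_true] at h1
    by_cases hik : i = k
    · subst hik
      cases b <;> cases c <;> simp_all
    · exfalso
      rw [if_neg hik] at h1
      cases b <;> simp at h1

lemma tsum_step (d N : ℕ) (x : Cyl d N) (H : Cyl d N → ℝ≥0∞) :
    ∑' y, stepProb d N x y * H y
      = (∑ i, (H (x + projE d N (Pi.single i 1)) + H (x + projE d N (Pi.single i (-1)))))
        / (2 * (d + 1)) := by
  rw [← sum_unitVecs d (fun e => H (x + projE d N e)), div_eq_mul_inv, Finset.sum_mul]
  have : ∀ y, stepProb d N x y * H y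
      = ∑ e ∈ unitVecs d, if y = x + projE d N e then H y * (2 * ((d : ℝ≥0∞) + 1))⁻¹ else 0 := by
    intro y
    unfold stepProb
    rw [Finset.card_filter, div_eq_mul_inv]
    push_cast
    rw [mul_assoc, Finset.sum_mul]
    refine Finset.sum_congr rfl fun e _ => ?_
    by_cases h : x + projE d N e = y
    · rw [if_pos h, if_pos h.symm, one_mul, mul_comm]
    · rw [if_neg h, if_neg (fun h' => h h'.symm), zero_mul]
  simp only [this]
  rw [Summable.tsum_finsetSum (fun _ _ => ENNReal.summable)]
  refine Finset.sum_congr rfl fun e _ => ?_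
  rw [tsum_eq_single (x + projE d N e)]
  · rw [if_pos rfl]
  · intro y hy; rw [if_neg hy]

/-- minimal lift of `y - x` to the lattice. -/
def lft (d N : ℕ) (x y : Cyl d N) : Lat d :=
  Fin.snoc (α := fun _ => ℤ) (fun i => (y.1 i - x.1 i).valMinAbs) (y.2 - x.2)

lemma lft_last (d N : ℕ) (x y : Cyl d N) : lft d N x y (Fin.last d) = y.2 - x.2 := by
  simp [lft]

lemma lft_cast (d N : ℕ) (x y : Cyl d N) (i : Fin d) :
    lft d N x y i.castSucc = (y.1 i - x.1 i).valMinAbs := by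
  simp [lft]

lemma lft_self (d N : ℕ) (x : Cyl d N) : lft d N x x = 0 := by
  ext k
  refine Fin.lastCases ?_ (fun i => ?_) k
  · simp [lft_last]
  · simp [lft_cast]

lemma single_abs {n : ℕ} (i k : Fin n) (c : ℤ) (hc : c = 1 ∨ c = -1) :
    -1 ≤ (Pi.single i c : Fin n → ℤ) k ∧ (Pi.single i c : Fin n → ℤ) k ≤ 1 := by
  rw [Pi.single_apply]
  split_ifs <;> omega

lemma Ff_lft_step (d N : ℕ) (hN : 16 ≤ N) (a s : ℝ) (hs : 0 ≤ s) (ha : 0 < a)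
    (x y : Cyl d N) (i : Fin (d + 1)) (c : ℤ) (hc : c = 1 ∨ c = -1) :
    Ff a s (((N : ℝ) / 8) ^ 2) (lft d N x (y + projE d N (Pi.single i c)))
      ≤ Ff a s (((N : ℝ) / 8) ^ 2) (lft d N x y + Pi.single i c) := by
  have hN' : (16 : ℝ) ≤ N := by exact_mod_cast hN
  have : NeZero N := ⟨by omega⟩
  set w := lft d N x (y + projE d N (Pi.single i c)) with hw
  by_cases h : rho a w ≤ ((N : ℝ) / 8) ^ 2
  · have hwk : ∀ k, -(N : ℤ) ≤ 8 * w k ∧ 8 * w k ≤ N := by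
      intro k
      have h1 := abs_le.1 (abs_le_of_sq_le_sq ((sq_le_rho a ha w k).trans h) (by positivity))
      constructor
      · have : -(N : ℝ) ≤ 8 * (w k : ℝ) := by linarith
        exact_mod_cast this
      · have : 8 * (w k : ℝ) ≤ (N : ℝ) := by linarith
        exact_mod_cast this
    have heq : w = lft d N x y + Pi.single i c := by
      rw [← sub_eq_iff_eq_add]
      ext k
      have hs := single_abs i k c hc
      have hk := hwk k
      revert hs hk
      refine Fin.lastCases ?_ (fun k => ?_) k
      · intro _ _
        rw [Pi.sub_apply, hw, lft_last, lft_last]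
        simp only [projE, Prod.snd_add]
        ring
      · intro hs hk
        rw [lft_cast]
        symm
        rw [ZMod.valMinAbs_spec]
        rw [Pi.sub_apply]
        constructor
        · rw [Int.cast_sub, hw, lft_cast, ZMod.coe_valMinAbs]
          simp only [projE, Prod.fst_add, Pi.add_apply]
          ring
        · rw [Set.mem_Ioc]
          constructor <;> omega
    rw [heq]
  · have : Ff a s (((N : ℝ) / 8) ^ 2) w = 0 := by unfold Ff; rw [if_neg h]
    rw [this]
    exact Ff_nonneg a s _ hs (by positivity) ha _

lemma sum_quad (d : ℕ) (t : ℝ) :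
    ∑ i : Fin (d + 1), ((t + ((Pi.single i 1 : Lat d) (Fin.last d) : ℤ)) ^ 2
      + (t + ((Pi.single i (-1) : Lat d) (Fin.last d) : ℤ)) ^ 2) = 2 * (d + 1) * t ^ 2 + 2 := by
  rw [Fin.sum_univ_castSucc]
  have : ∀ (i : Fin d) (c : ℤ), (Pi.single i.castSucc c : Lat d) (Fin.last d) = 0 := by
    intro i c
    rw [Pi.single_apply, if_neg (Fin.castSucc_lt_last i).ne']
  simp only [this, Pi.single_eq_same]
  simp
  ring

/-- the barrier function. -/
noncomputable def barr (d N : ℕ) (j : ℤ) (a s D : ℝ) (A : Finset (Cyl d N)) (y : Cyl d N) : ℝ :=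
  ∑ x ∈ A, (Ff a s (((N : ℝ) / 8) ^ 2) (lft d N x y)
    + D * (16 * (N : ℝ) ^ 2 - ((y.2 : ℝ) - j * N) ^ 2))

lemma barr_step (d N : ℕ) (hN : 16 ≤ N) (j : ℤ) (a s C : ℝ) (hs : 0 ≤ s) (ha : 0 < a)
    (A : Finset (Cyl d N))
    (hF : ∀ v : Fin (d + 1) → ℤ,
      ∑ i, (Ff a s (((N : ℝ) / 8) ^ 2) (v + Pi.single i 1)
        + Ff a s (((N : ℝ) / 8) ^ 2) (v + Pi.single i (-1)))
        ≤ 2 * (d + 1 : ℕ) * Ff a s (((N : ℝ) / 8) ^ 2) v + 2 * (d + 1 : ℕ) * C)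
    (y : Cyl d N) :
    ∑ i, (barr d N j a s ((d + 1) * C) A (y + projE d N (Pi.single i 1))
      + barr d N j a s ((d + 1) * C) A (y + projE d N (Pi.single i (-1))))
      ≤ 2 * (d + 1) * barr d N j a s ((d + 1) * C) A y := by
  unfold barr
  simp only [← Finset.sum_add_distrib]
  rw [Finset.sum_comm, Finset.mul_sum]
  refine Finset.sum_le_sum fun x _ => ?_
  set R := ((N : ℝ) / 8) ^ 2 with hR
  have h1 := hF (lft d N x y)
  have h2 := sum_quad d ((y.2 : ℝ) - j * N)
  have h3 : ∀ i : Fin (d + 1), ∀ c : ℤ,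
      ((y + projE d N (Pi.single i c)).2 : ℝ) - j * N
        = ((y.2 : ℝ) - j * N) + ((Pi.single i c : Lat d) (Fin.last d) : ℤ) := by
    intro i c
    simp only [projE, Prod.snd_add]
    push_cast; ring
  simp only [h3]
  have h4 : ∑ i, (Ff a s R (lft d N x (y + projE d N (Pi.single i 1)))
      + Ff a s R (lft d N x (y + projE d N (Pi.single i (-1)))))
      ≤ ∑ i, (Ff a s R (lft d N x y + Pi.single i 1) + Ff a s R (lft d N x y + Pi.single i (-1))) :=
    Finset.sum_le_sum fun i _ => add_le_add
      (Ff_lft_step d N hN a s hs ha x y i 1 (Or.inl rfl))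
      (Ff_lft_step d N hN a s hs ha x y i (-1) (Or.inr rfl))
  set T := (y.2 : ℝ) - j * N with hT
  have h5 : ∀ i : Fin (d + 1),
      (Ff a s R (lft d N x (y + projE d N (Pi.single i 1)))
        + (d + 1) * C * (16 * (N : ℝ) ^ 2 - (T + ((Pi.single i 1 : Lat d) (Fin.last d) : ℤ)) ^ 2)
      + (Ff a s R (lft d N x (y + projE d N (Pi.single i (-1))))
        + (d + 1) * C * (16 * (N : ℝ) ^ 2 - (T + ((Pi.single i (-1) : Lat d) (Fin.last d) : ℤ)) ^ 2)))
      = (Ff a s R (lft d N x (y + projE d N (Pi.single i 1)))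
      + Ff a s R (lft d N x (y + projE d N (Pi.single i (-1)))))
      + ((d + 1) * C * (32 * (N : ℝ) ^ 2) - (d + 1) * C *
        ((T + ((Pi.single i 1 : Lat d) (Fin.last d) : ℤ)) ^ 2
        + (T + ((Pi.single i (-1) : Lat d) (Fin.last d) : ℤ)) ^ 2)) := by
    intro i; ring
  simp only [h5]
  rw [Finset.sum_add_distrib, Finset.sum_sub_distrib, Finset.sum_const, ← Finset.mul_sum, h2]
  simp only [Finset.card_univ, Fintype.card_fin, nsmul_eq_mul]
  push_cast at h1 ⊢
  linarith

lemma barr_nonneg (d N : ℕ) (j : ℤ) (a s D : ℝ) (hs : 0 ≤ s) (ha : 0 < a) (hD : 0 ≤ D)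
    (hN : 1 ≤ N) (A : Finset (Cyl d N)) (y : Cyl d N)
    (hy : |(y.2 : ℝ) - j * N| ≤ 4 * N) : 0 ≤ barr d N j a s D A y := by
  have hN' : (1 : ℝ) ≤ N := by exact_mod_cast hN
  refine Finset.sum_nonneg fun x _ => ?_
  have h1 := Ff_nonneg a s (((N : ℝ) / 8) ^ 2) hs (by positivity) ha (lft d N x y)
  have h2 : ((y.2 : ℝ) - j * N) ^ 2 ≤ (4 * N) ^ 2 := sq_le_sq' (abs_le.1 hy).1 (abs_le.1 hy).2
  have : 0 ≤ D * (16 * (N : ℝ) ^ 2 - ((y.2 : ℝ) - j * N) ^ 2) :=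
    mul_nonneg hD (by nlinarith)
  linarith

lemma Btl_abs (d N : ℕ) (j : ℤ) (y : Cyl d N) (hy : y ∈ Btl d N j) :
    |(y.2 : ℝ) - j * N| ≤ 2 * N := by
  obtain ⟨h1, h2⟩ := hy
  have h1' : ((j : ℝ) - 2) * N + 1 ≤ y.2 := by exact_mod_cast h1
  have h2' : (y.2 : ℝ) ≤ ((j : ℝ) + 2) * N - 1 := by exact_mod_cast h2
  rw [abs_le]; constructor <;> linarith

/-- Main bound for large `N`. -/
lemma large_N (d N : ℕ) (hN : 16 ≤ N) (j : ℤ) (a s C c0 : ℝ) (hs : 0 ≤ s) (ha : 0 < a)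
    (hC : 0 ≤ C) (hc0 : 0 < c0)
    (hF0 : c0 ≤ Ff a s (((N : ℝ) / 8) ^ 2) (0 : Fin (d + 1) → ℤ))
    (hF : ∀ v : Fin (d + 1) → ℤ,
      ∑ i, (Ff a s (((N : ℝ) / 8) ^ 2) (v + Pi.single i 1)
        + Ff a s (((N : ℝ) / 8) ^ 2) (v + Pi.single i (-1)))
        ≤ 2 * (d + 1 : ℕ) * Ff a s (((N : ℝ) / 8) ^ 2) v + 2 * (d + 1 : ℕ) * C)
    (Pl : Cyl d N → Measure (ℕ → Cyl d N)) (hP : IsCylRW d N Pl)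
    (A : Finset (Cyl d N)) (hA : (↑A : Set (Cyl d N)) ⊆ Cblk d N j)
    (z : Cyl d N) (hz : z.2 = (j - 1) * (N : ℤ) ∨ z.2 = (j + 1) * (N : ℤ)) :
    ((Pl z) {ω | entT (↑A : Set (Cyl d N)) ω < exitT (Btl d N j) ω}).toReal
      ≤ A.card * ((d + 1) * C * (15 * (N : ℝ) ^ 2)) / c0 := by
  have hN' : (16 : ℝ) ≤ N := by exact_mod_cast hN
  set D : ℝ := (d + 1) * C with hD
  have hD0 : 0 ≤ D := by positivity
  set h : Cyl d N → ℝ := fun y => if y ∈ Btl d N j then barr d N j a s D A y / c0 else 0 with hh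
  have hh0 : ∀ y, 0 ≤ h y := by
    intro y
    simp only [hh]
    split_ifs with hy
    · refine div_nonneg ?_ hc0.le
      refine barr_nonneg d N j a s D hs ha hD0 (by omega) A y ?_
      have := Btl_abs d N j y hy
      linarith
    · exact le_rfl
  have hzv : h z ≤ A.card * (D * (15 * (N : ℝ) ^ 2)) / c0 := by
    have hb : barr d N j a s D A z = A.card * (D * (15 * (N : ℝ) ^ 2)) := by
      unfold barr
      rw [← nsmul_eq_mul, ← Finset.sum_const]
      refine Finset.sum_congr rfl fun x hx => ?_
      have hxC := hA hx
      obtain ⟨h1, h2⟩ := hxC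
      have hz' : (z.2 : ℝ) = (j - 1) * N ∨ (z.2 : ℝ) = (j + 1) * N := by
        rcases hz with hz | hz
        · left; exact_mod_cast hz
        · right; exact_mod_cast hz
      have hF0 : Ff a s (((N : ℝ) / 8) ^ 2) (lft d N x z) = 0 := by
        unfold Ff
        rw [if_neg]
        intro hle
        have h3 := (sq_le_rho a ha (lft d N x z) (Fin.last d)).trans hle
        have h4 := abs_le.1 (abs_le_of_sq_le_sq h3 (by positivity))
        rw [lft_last] at h4
        push_cast at h4
        rcases hz' with hz' | hz' <;> rw [hz'] at h4 <;> linarith [h4.1, h4.2]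
      rw [hF0]
      rcases hz' with hz' | hz' <;> rw [hz'] <;> ring
    simp only [hh]
    split_ifs
    · rw [hb]
    · positivity
  have hstep : ∀ y ∈ Btl d N j, ∑ i, (h (y + projE d N (Pi.single i 1))
      + h (y + projE d N (Pi.single i (-1)))) ≤ 2 * (d + 1) * h y := by
    intro y hy
    have hle : ∀ i : Fin (d + 1), ∀ c : ℤ, (c = 1 ∨ c = -1) →
        h (y + projE d N (Pi.single i c))
          ≤ barr d N j a s D A (y + projE d N (Pi.single i c)) / c0 := by
      intro i c hc
      simp only [hh]
      split_ifs
      · exact le_rfl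
      · refine div_nonneg ?_ hc0.le
        refine barr_nonneg d N j a s D hs ha hD0 (by omega) A _ ?_
        have h1 := abs_le.1 (Btl_abs d N j y hy)
        have h2 := single_abs i (Fin.last d) c hc
        have h2a : (-1 : ℝ) ≤ ((Pi.single i c : Fin (d + 1) → ℤ) (Fin.last d) : ℤ) := by
          exact_mod_cast h2.1
        have h2b : (((Pi.single i c : Fin (d + 1) → ℤ) (Fin.last d) : ℤ) : ℝ) ≤ 1 := by
          exact_mod_cast h2.2
        simp only [projE, Prod.snd_add]
        push_cast
        rw [abs_le]
        constructor <;> linarith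
    have hb := barr_step d N hN j a s C hs ha A hF y
    calc _ ≤ ∑ i, (barr d N j a s D A (y + projE d N (Pi.single i 1)) / c0
          + barr d N j a s D A (y + projE d N (Pi.single i (-1))) / c0) :=
          Finset.sum_le_sum fun i _ => add_le_add (hle i 1 (Or.inl rfl)) (hle i (-1) (Or.inr rfl))
      _ = (∑ i, (barr d N j a s D A (y + projE d N (Pi.single i 1))
          + barr d N j a s D A (y + projE d N (Pi.single i (-1))))) / c0 := by
          rw [Finset.sum_div]
          exact Finset.sum_congr rfl fun i _ => (add_div _ _ _).symm
      _ ≤ (2 * (d + 1) * barr d N j a s D A y) / c0 := by gcongr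
      _ = _ := by
          simp only [hh]
          rw [if_pos hy]; ring
  have hAH : ∀ x ∈ (↑A : Set (Cyl d N)), x ∈ Btl d N j → 1 ≤ ENNReal.ofReal (h x) := by
    intro x hx hxB
    rw [ENNReal.one_le_ofReal]
    simp only [hh]
    rw [if_pos hxB, le_div_iff₀ hc0, one_mul]
    unfold barr
    have hxB' := abs_le.1 (Btl_abs d N j x hxB)
    have hnn : 0 ≤ D * (16 * (N : ℝ) ^ 2 - ((x.2 : ℝ) - j * N) ^ 2) := by
      refine mul_nonneg hD0 ?_
      have := sq_le_sq' hxB'.1 hxB'.2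
      nlinarith
    have h1 := Finset.single_le_sum (f := fun x' => Ff a s (((N : ℝ) / 8) ^ 2) (lft d N x' x)
      + D * (16 * (N : ℝ) ^ 2 - ((x.2 : ℝ) - j * N) ^ 2)) (s := A)
      (fun x' _ => add_nonneg (Ff_nonneg a s _ hs (by positivity) ha _) hnn)
      (show x ∈ A from hx)
    refine le_trans ?_ h1
    simp only [lft_self]
    linarith
  have hH : ∀ x ∈ Btl d N j, ∑' y, stepProb d N x y * ENNReal.ofReal (h y)
      ≤ ENNReal.ofReal (h x) := by
    intro x hx
    rw [tsum_step]
    have hpos : (0 : ℝ) < 2 * (d + 1) := by positivity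
    have e : (2 * ((d : ℝ≥0∞) + 1)) = ENNReal.ofReal (2 * (d + 1)) := by
      rw [ENNReal.ofReal_mul (by norm_num), ENNReal.ofReal_add (by positivity) (by norm_num)]
      simp
    rw [e]
    refine ENNReal.div_le_of_le_mul ?_
    rw [← ENNReal.ofReal_mul (hh0 x)]
    calc _ = ENNReal.ofReal (∑ i, (h (x + projE d N (Pi.single i 1))
      + h (x + projE d N (Pi.single i (-1))))) := by
          rw [ENNReal.ofReal_sum_of_nonneg (fun i _ => add_nonneg (hh0 _) (hh0 _))]
          exact Finset.sum_congr rfl fun i _ => (ENNReal.ofReal_add (hh0 _) (hh0 _)).symm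
      _ ≤ _ := ENNReal.ofReal_le_ofReal ((hstep x hx).trans_eq (mul_comm _ _))
  have hfin := hit_bound d N Pl hP (↑A) (Btl d N j) (fun y => ENNReal.ofReal (h y)) hAH hH z
  exact (ENNReal.toReal_le_of_le_ofReal (hh0 z) hfin).trans hzv



/-- **(1.18).** For `d ≥ 3` there is a constant `c` depending only on `d` such that for
all `N ≥ 2`, all `j ∈ ℤ`, every nonempty `A ⊆ C_j` and every
`z ∈ (ℤ/Nℤ)^d × {(j-1)N, (j+1)N}`, `P_z[H_A < T_{B̃_j}] ≤ c |A| / N^{d-1}`. -/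
theorem statement_14 (d : ℕ) (hd : 3 ≤ d) :
    ∃ c : ℝ, 0 < c ∧
      ∀ N : ℕ, 2 ≤ N → ∀ Pl : Cyl d N → Measure (ℕ → Cyl d N), IsCylRW d N Pl →
      ∀ j : ℤ, ∀ A : Finset (Cyl d N), A.Nonempty → (↑A : Set (Cyl d N)) ⊆ Cblk d N j →
      ∀ z : Cyl d N, (z.2 = (j - 1) * (N : ℤ) ∨ z.2 = (j + 1) * (N : ℤ)) →
        ((Pl z) {ω | entT (↑A : Set (Cyl d N)) ω < exitT (Btl d N j) ω}).toReal
          ≤ c * A.card / (N : ℝ) ^ (d - 1) := by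
  obtain ⟨m, rfl⟩ : ∃ m, d = m + 1 := ⟨d - 1, by omega⟩
  set d := m + 1 with hdm
  set s : ℝ := (m : ℝ) / 2 with hs
  have hm : (2 : ℝ) ≤ m := by exact_mod_cast (show 2 ≤ m by omega)
  have hs0 : 0 < s := by rw [hs]; linarith
  have hs2 : 2 * (s + 1) = ((d + 1 : ℕ) : ℝ) := by rw [hs, hdm]; push_cast; ring
  obtain ⟨a, C, ha, hC, hF⟩ := Ff_step (d + 1) (by omega) s hs2
  have ha0 : 0 < a := by linarith
  obtain ⟨Q0, c0, hc0, hQ0⟩ := Ff_zero_lb (n := d + 1) s a hs0 ha0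
  obtain ⟨N1, hN1⟩ := exists_nat_ge (8 * Q0)
  set N0 : ℕ := max 48 N1 with hN0
  set c1 : ℝ := (d + 1) * C * 15 * 8 ^ (m + 2) / c0 with hc1
  have hc1p : 0 < c1 := by positivity
  refine ⟨c1 + (N0 : ℝ) ^ m, by positivity, ?_⟩
  intro N hN Pl hP j A hAne hA z hz
  have hdm1 : d - 1 = m := by omega
  rw [hdm1]
  have hN2 : (2 : ℝ) ≤ N := by exact_mod_cast hN
  have hNm : 0 < (N : ℝ) ^ m := by positivity
  have hcard : (1 : ℝ) ≤ A.card := by exact_mod_cast hAne.card_pos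
  by_cases hNN : N0 ≤ N
  · have h48 : 48 ≤ N := (le_max_left _ _).trans hNN
    have hN1N : N1 ≤ N := (le_max_right _ _).trans hNN
    have h48' : (48 : ℝ) ≤ N := by exact_mod_cast h48
    have hN1N' : (N1 : ℝ) ≤ N := by exact_mod_cast hN1N
    have hQ6 : (6 : ℝ) ≤ (N : ℝ) / 8 := by linarith
    have := large_N d N (by omega) j a s (C * (((N : ℝ) / 8) ^ 2) ^ (-(s + 1))) c0 hs0.le ha0
      (by positivity) hc0 (hQ0 _ (by linarith) (by linarith)) (hF _ hQ6) Pl hP A hA z hz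
    refine this.trans ?_
    have hpow : (((N : ℝ) / 8) ^ 2) ^ (-(s + 1)) = 8 ^ (m + 2) / ((N : ℝ) ^ m * (N : ℝ) ^ 2) := by
      have hp : (0 : ℝ) ≤ (N : ℝ) / 8 := by positivity
      rw [← Real.rpow_natCast _ 2, ← Real.rpow_mul hp,
        show ((2 : ℕ) : ℝ) * (-(s + 1)) = -((m + 2 : ℕ) : ℝ) by rw [hs]; push_cast; ring,
        Real.rpow_neg hp, Real.rpow_natCast, div_pow, inv_div, pow_add]
      ring
    rw [hpow]
    have e : A.card * (((d : ℝ) + 1) * (C * (8 ^ (m + 2) / ((N : ℝ) ^ m * (N : ℝ) ^ 2)))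
        * (15 * (N : ℝ) ^ 2)) / c0 = c1 * A.card / (N : ℝ) ^ m := by
      rw [hc1]; field_simp
    rw [e]
    gcongr
    have : (0 : ℝ) ≤ (N0 : ℝ) ^ m := by positivity
    linarith
  · have := hP.1 z
    have h1 : ((Pl z) {ω | entT (↑A : Set (Cyl d N)) ω < exitT (Btl d N j) ω}).toReal ≤ 1 :=
      measureReal_le_one
    refine h1.trans ?_
    rw [le_div_iff₀ hNm, one_mul]
    have h2 : (N : ℝ) ^ m ≤ (N0 : ℝ) ^ m := by
      have : (N : ℝ) ≤ N0 := by exact_mod_cast (not_le.1 hNN).le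
      gcongr
    have h3 : (0 : ℝ) ≤ (N0 : ℝ) ^ m := by positivity
    nlinarith

end DiscCyl
end

section
/- (Inequality (1.21)) Let d ≥ 3 and λ > 0. There is a constant c depending only on d such that for all N ≥ 2, all u > 0 with uN^{d−1} ≥ 1, all j ∈ ℤ and every nonempty A ⊆ C_j: E[exp(λ Σ_{x∈A} 1{H_x < D^j_{uN^{d−1}}})] ≤ exp(c u |A| (‖φ_j‖_∞ − 1)), where φ_j(z) = E_z[exp(λ Σ_{x∈A} 1{H_x < T_{B̃_j}})] and ‖φ_j‖_∞ = sup_{z∈E} φ_j(z). -/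
open MeasureTheory Filter
open scoped ENNReal Classical

namespace DiscCyl

section
/-- coordinate vector -/
def bv (d : ℕ) (k : Fin (d+1)) : Lat d := Pi.single k 1

/-- normalisation -/
noncomputable def cst (d : ℕ) : ℝ≥0∞ := (2 * ((d : ℝ≥0∞) + 1))⁻¹

/-- heat kernel on the lattice -/
noncomputable def hk (d : ℕ) : ℕ → Lat d → ℝ≥0∞
  | 0, v => if v = 0 then 1 else 0
  | n + 1, v => cst d * ∑ k, (hk d n (v - bv d k) + hk d n (v + bv d k))

/-- abstract reflection principle -/
lemma hk_reflect (d : ℕ) (β : Lat d →+ ℤ) (α : Lat d) (π : Equiv.Perm (Fin (d+1)))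
    (hα : β α = 2)
    (hπ : ∀ k, bv d k - β (bv d k) • α = bv d (π k) ∨ bv d k - β (bv d k) • α = - bv d (π k))
    (hβ : ∀ k, |β (bv d k)| ≤ 1) (q : ℤ) (hq : 0 ≤ q) (n : ℕ) :
    ∀ v : Lat d, 0 ≤ q - β v → hk d n (v + (q - β v) • α) ≤ hk d n v := by
  induction n with
  | zero =>
    intro v hv
    simp only [hk]
    split_ifs with h1 h2 h2 <;> try simp
    have : β (v + (q - β v) • α) = 0 := by rw [h1]; simp
    rw [map_add, map_zsmul, hα, smul_eq_mul] at this
    have h3 : q - β v = 0 := by linarith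
    rw [h3] at h1; simp at h1; exact h2 h1
  | succ n ih =>
    intro v hv
    rcases hv.eq_or_lt with h0 | h0
    · rw [← h0]; simp
    · simp only [hk]
      gcongr cst d * ?_
      rw [← Equiv.sum_comp π]
      apply Finset.sum_le_sum
      intro k _
      have hk1 := abs_le.mp (hβ k)
      have i1 := ih (v - bv d k) (by rw [map_sub]; linarith)
      have i2 := ih (v + bv d k) (by rw [map_add]; linarith)
      have e1 : v - bv d k + (q - β (v - bv d k)) • α
          = v + (q - β v) • α - (bv d k - β (bv d k) • α) := by
        rw [map_sub, sub_smul, sub_smul, sub_smul]; abel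
      have e2 : v + bv d k + (q - β (v + bv d k)) • α
          = v + (q - β v) • α + (bv d k - β (bv d k) • α) := by
        rw [map_add, sub_smul, add_smul, sub_smul]; abel
      rw [e1] at i1
      rw [e2] at i2
      rcases hπ k with h | h
      · rw [h] at i1 i2
        exact add_le_add i1 i2
      · rw [h] at i1 i2
        rw [add_comm]
        rw [sub_neg_eq_add] at i1
        rw [← sub_eq_add_neg] at i2
        exact add_le_add i1 i2

lemma hk_move (d : ℕ) (β : Lat d →+ ℤ) (α : Lat d) (π : Equiv.Perm (Fin (d+1)))
    (hα : β α = 2)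
    (hπ : ∀ k, bv d k - β (bv d k) • α = bv d (π k) ∨ bv d k - β (bv d k) • α = - bv d (π k))
    (hβ : ∀ k, |β (bv d k)| ≤ 1) (n : ℕ) (w : Lat d) (m : ℤ) (hm : 0 ≤ m) (hm2 : m ≤ β w) :
    hk d n w ≤ hk d n (w - m • α) := by
  have := hk_reflect d β α π hα hπ hβ (β w - m) (by linarith) n (w - m • α)
  have e : β w - m - β (w - m • α) = m := by
    rw [map_sub, map_zsmul, hα, smul_eq_mul]; ring
  rw [e] at this
  simpa using this hm

/-- evaluation functional -/
def evl (d : ℕ) (i : Fin (d+1)) : Lat d →+ ℤ := Pi.evalAddMonoidHom _ i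

lemma hk_move_diag (d : ℕ) (i l : Fin (d+1)) (hil : i ≠ l) (s t : ℤ)
    (hs : s = 1 ∨ s = -1) (ht : t = 1 ∨ t = -1) (n : ℕ) (w : Lat d) (m : ℤ) (hm : 0 ≤ m)
    (hm2 : m ≤ s * w l + t * w i) :
    hk d n w ≤ hk d n (w - m • (s • bv d l + t • bv d i)) := by
  refine hk_move d (s • evl d l + t • evl d i) _ (Equiv.swap l i) ?_ ?_ ?_ n w m hm ?_
  · simp [evl, bv, hil, hil.symm]
    rcases hs with rfl | rfl <;> rcases ht with rfl | rfl <;> norm_num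
  · intro k
    by_cases h1 : k = l
    · subst h1
      simp [evl, bv, hil, hil.symm]
      rcases hs with rfl | rfl <;> rcases ht with rfl | rfl <;> simp
    · by_cases h2 : k = i
      · subst h2
        simp [evl, bv, hil, hil.symm]
        rcases hs with rfl | rfl <;> rcases ht with rfl | rfl <;> simp
      · left
        rw [Equiv.swap_apply_of_ne_of_ne h1 h2]
        simp [evl, bv, Ne.symm h1, Ne.symm h2]
  · intro k
    by_cases h1 : k = l
    · subst h1
      simp [evl, bv, hil, hil.symm]
      rcases hs with rfl | rfl <;> simp
    · by_cases h2 : k = i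
      · subst h2
        simp [evl, bv, hil, hil.symm]
        rcases ht with rfl | rfl <;> simp
      · simp [evl, bv, Ne.symm h1, Ne.symm h2]
  · simpa [evl] using hm2

lemma hk_move_vert (d : ℕ) (l : Fin (d+1)) (s : ℤ)
    (hs : s = 1 ∨ s = -1) (n : ℕ) (w : Lat d) (m : ℤ) (hm : 0 ≤ m)
    (hm2 : m ≤ s * w l) :
    hk d n w ≤ hk d n (w - m • ((2 * s) • bv d l)) := by
  refine hk_move d (s • evl d l) _ (Equiv.refl _) ?_ ?_ ?_ n w m hm ?_
  · simp [evl, bv]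
    rcases hs with rfl | rfl <;> norm_num
  · intro k
    by_cases h1 : k = l
    · subst h1
      right
      rcases hs with rfl | rfl <;> simp [evl, bv, two_smul]
    · left
      simp [evl, bv, Ne.symm h1]
  · intro k
    by_cases h1 : k = l
    · subst h1
      rcases hs with rfl | rfl <;> simp [evl, bv]
    · simp [evl, bv, Ne.symm h1]
  · simpa [evl] using hm2

lemma projE_add (d N : ℕ) (v w : Lat d) : projE d N (v + w) = projE d N v + projE d N w := by
  ext <;> simp [projE]

/-- projection as a hom -/
def pj (d N : ℕ) : Lat d →+ Cyl d N where
  toFun := projE d N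
  map_zero' := by ext <;> simp [projE]
  map_add' := projE_add d N

/-- heat kernel on the cylinder -/
noncomputable def gk (d N n : ℕ) (y : Cyl d N) : ℝ≥0∞ :=
  ∑' v : Lat d, if pj d N v = y then hk d n v else 0

lemma cst_mul (d : ℕ) : cst d * (∑ _k : Fin (d+1), (2 : ℝ≥0∞)) = 1 := by
  rw [Finset.sum_const, cst]
  simp
  rw [mul_comm ((d : ℝ≥0∞) + 1) 2]
  apply ENNReal.inv_mul_cancel <;> simp [ENNReal.mul_eq_top]

lemma hk_sum (d n : ℕ) : ∑' v, hk d n v = 1 := by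
  induction n with
  | zero => simp [hk]
  | succ n ih =>
    simp only [hk]
    rw [ENNReal.tsum_mul_left, Summable.tsum_finsetSum (fun _ _ => ENNReal.summable)]
    have : ∀ k, ∑' v, (hk d n (v - bv d k) + hk d n (v + bv d k)) = 2 := by
      intro k
      rw [ENNReal.tsum_add]
      have h1 := (Equiv.subRight (bv d k)).tsum_eq (hk d n)
      have h2 := (Equiv.addRight (bv d k)).tsum_eq (hk d n)
      simp only [Equiv.subRight_apply, Equiv.coe_addRight] at h1 h2
      rw [h1, h2, ih]; norm_num
    simp only [this]
    exact cst_mul d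

lemma gk_sum (d N n : ℕ) : ∑' y, gk d N n y = 1 := by
  unfold gk
  rw [ENNReal.tsum_comm, ← hk_sum d n]
  congr 1; ext v
  simp

lemma gk_shift_le (d N n : ℕ) (y : Cyl d N) (α : Lat d) :
    (∑' v : Lat d, if pj d N v = y then hk d n (v - α) else 0) = gk d N n (y - pj d N α) := by
  unfold gk
  rw [← (Equiv.subRight α).tsum_eq (fun v => if pj d N v = y - pj d N α then hk d n v else 0)]
  congr 1; ext v
  simp

/-- horizontal unit vector -/
def hv (d N : ℕ) (i : Fin d) : Cyl d N := (Pi.single i 1, 0)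

lemma pj_bv_castSucc (d N : ℕ) (i : Fin d) : pj d N (bv d i.castSucc) = hv d N i := by
  refine Prod.ext ?_ ?_
  · funext k
    by_cases h : k = i
    · subst h; simp [pj, projE, bv, hv]
    · simp [pj, projE, bv, hv, h, Pi.single_apply]
  · simp [pj, projE, bv, hv, Pi.single_apply, (Fin.castSucc_lt_last i).ne']

lemma pj_bv_last (d N : ℕ) : pj d N (bv d (Fin.last d)) = (0, 1) := by
  refine Prod.ext ?_ ?_
  · funext k
    simp [pj, projE, bv, Pi.single_apply, (Fin.castSucc_lt_last k).ne]
  · simp [pj, projE, bv]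

lemma gk_diag (d N n : ℕ) (i : Fin d) (s : ℤ) (hs : s = 1 ∨ s = -1) (y : Cyl d N) (m : ℕ)
    (hm : (m : ℤ) ≤ s * y.2) :
    gk d N n y ≤ gk d N n (y + (m • hv d N i) - (0, s * m))
      + gk d N n (y - (m • hv d N i) - (0, s * m)) := by
  have e1 : y + (m • hv d N i) - (0, s * m)
      = y - pj d N ((m : ℤ) • (s • bv d (Fin.last d) + (-1 : ℤ) • bv d i.castSucc)) := by
    rw [map_zsmul, map_add, map_zsmul, map_zsmul, pj_bv_castSucc, pj_bv_last]
    ext <;> simp [hv]; ring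
  have e2 : y - (m • hv d N i) - (0, s * m)
      = y - pj d N ((m : ℤ) • (s • bv d (Fin.last d) + (1 : ℤ) • bv d i.castSucc)) := by
    rw [map_zsmul, map_add, map_zsmul, map_zsmul, pj_bv_castSucc, pj_bv_last]
    ext <;> simp [hv]; ring
  rw [e1, e2, ← gk_shift_le, ← gk_shift_le, ← ENNReal.tsum_add]
  unfold gk
  apply ENNReal.tsum_le_tsum
  intro v
  split_ifs with h
  · have h2 : v (Fin.last d) = y.2 := by rw [← h]; rfl
    rcases le_total 0 (v i.castSucc) with h0 | h0
    · refine le_trans ?_ le_add_self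
      apply hk_move_diag d i.castSucc (Fin.last d) (Fin.castSucc_lt_last i).ne s 1 hs (Or.inl rfl)
      · positivity
      · rw [h2]; linarith
    · refine le_trans ?_ le_self_add
      apply hk_move_diag d i.castSucc (Fin.last d) (Fin.castSucc_lt_last i).ne s (-1) hs
        (Or.inr rfl)
      · positivity
      · rw [h2]; linarith
  · simp

lemma gk_vert (d N n : ℕ) (s : ℤ) (hs : s = 1 ∨ s = -1) (y : Cyl d N) (m : ℕ)
    (hm : (m : ℤ) ≤ s * y.2) :
    gk d N n y ≤ gk d N n (y - (0, 2 * s * m)) := by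
  have e1 : y - (0, 2 * s * m)
      = y - pj d N ((m : ℤ) • ((2 * s) • bv d (Fin.last d))) := by
    rw [map_zsmul, map_zsmul, pj_bv_last]
    ext <;> simp; ring
  rw [e1, ← gk_shift_le]
  unfold gk
  apply ENNReal.tsum_le_tsum
  intro v
  split_ifs with h
  · have h2 : v (Fin.last d) = y.2 := by rw [← h]; rfl
    apply hk_move_vert d (Fin.last d) s hs
    · positivity
    · rw [h2]; linarith
  · simp

end


section
/-- signed horizontal shift -/
noncomputable def shT (d N : ℕ) (S T : Finset (Fin d)) (m : Fin d → ℕ) : Cyl d N :=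
  (fun i => if i ∈ S then (if i ∈ T then (m i : ZMod N) else -(m i : ZMod N)) else 0, 0)

lemma gk_multi (d N n : ℕ) (s : ℤ) (hs : s = 1 ∨ s = -1) (m : Fin d → ℕ) (S : Finset (Fin d)) :
    ∀ y : Cyl d N, ((∑ i ∈ S, m i : ℕ) : ℤ) ≤ s * y.2 →
    gk d N n y ≤ ∑ T ∈ S.powerset,
      gk d N n (y + shT d N S T m - (0, s * ((∑ i ∈ S, m i : ℕ) : ℤ))) := by
  induction S using Finset.induction_on with
  | empty =>
    intro y _
    simp [shT]
    apply le_of_eq; congr 1; ext <;> simp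
  | insert a S ha ih =>
    intro y hy
    rw [Finset.sum_insert ha] at hy ⊢
    push_cast at hy
    have hss : s * s = 1 := by rcases hs with rfl | rfl <;> norm_num
    have h0 : (0 : ℤ) ≤ ∑ i ∈ S, (m i : ℤ) := Finset.sum_nonneg (fun _ _ => by positivity)
    refine (gk_diag d N n a s hs y (m a) (by linarith)).trans ?_
    rw [Finset.sum_powerset_insert ha, add_comm]
    refine add_le_add ((ih _ ?_).trans (le_of_eq ?_)) ((ih _ ?_).trans (le_of_eq ?_))
    · have : s * (y - m a • hv d N a - (0, s * (m a : ℤ))).2 = s * y.2 - (s * s) * m a := by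
        simp [hv]; ring
      rw [this, hss]; push_cast; linarith
    · apply Finset.sum_congr rfl
      intro T hT
      have haT : a ∉ T := fun h => ha (Finset.mem_powerset.mp hT h)
      congr 1
      refine Prod.ext ?_ ?_
      · funext i
        by_cases h : i = a
        · subst h; simp [shT, hv, ha, haT]; ring
        · simp [shT, hv, h]
      · simp [shT, hv]; ring
    · have : s * (y + m a • hv d N a - (0, s * (m a : ℤ))).2 = s * y.2 - (s * s) * m a := by
        simp [hv]; ring
      rw [this, hss]; push_cast; linarith
    · apply Finset.sum_congr rfl
      intro T hT
      congr 1
      refine Prod.ext ?_ ?_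
      · funext i
        by_cases h : i = a
        · subst h; simp [shT, hv, ha]
        · simp [shT, hv, h]
      · simp [shT, hv]; ring

lemma gk_bound0 (d N n M : ℕ) (hM : M < N) (y : Cyl d N) (hy : ((d : ℤ) + 2) * M ≤ |y.2|) :
    ((M : ℝ≥0∞) + 1) ^ (d + 1) * gk d N n y ≤ 2 ^ d := by
  obtain ⟨s, hs, hsy⟩ : ∃ s : ℤ, (s = 1 ∨ s = -1) ∧ |y.2| = s * y.2 := by
    rcases abs_cases y.2 with h | h
    · exact ⟨1, Or.inl rfl, by linarith⟩
    · exact ⟨-1, Or.inr rfl, by linarith⟩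
  rw [hsy] at hy
  have hss : s * s = 1 := by rcases hs with rfl | rfl <;> norm_num
  have hs0 : s ≠ 0 := by rintro rfl; simp at hs
  let ι := Fin (M+1) × (Fin d → Fin (M+1))
  let ψ : Finset (Fin d) → ι → Cyl d N := fun T p =>
    (y - (0, 2 * s * (p.1 : ℕ))) + shT d N Finset.univ T (fun i => (p.2 i : ℕ))
      - (0, s * ((∑ i, (p.2 i : ℕ) : ℕ) : ℤ))
  have hinj : ∀ T, Function.Injective (ψ T) := by
    rintro T ⟨p, q⟩ ⟨p', q'⟩ h
    simp only [ψ, Prod.ext_iff] at h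
    obtain ⟨h1, h2⟩ := h
    have hq : q = q' := by
      funext i
      have := congrFun h1 i
      simp [shT] at this
      have h3 : ((q i : ℕ) : ZMod N) = ((q' i : ℕ) : ZMod N) := by
        split_ifs at this with hi
        · exact this
        · exact neg_injective this
      rw [ZMod.natCast_eq_natCast_iff', Nat.mod_eq_of_lt (by omega), Nat.mod_eq_of_lt (by omega)]
        at h3
      exact Fin.ext h3
    subst hq
    have hp : p = p' := by
      simp [shT] at h2
      rcases h2 with h2 | h2
      · exact Fin.ext h2
      · exact absurd h2 hs0
    rw [hp]
  have hle : ∀ p : ι, gk d N n y ≤ ∑ T ∈ (Finset.univ : Finset (Fin d)).powerset,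
      gk d N n (ψ T p) := by
    rintro ⟨p, q⟩
    have hp : ((p : ℕ) : ℤ) ≤ M := by have := p.2; omega
    have hq : ((∑ i, (q i : ℕ) : ℕ) : ℤ) ≤ d * M := by
      push_cast
      calc ∑ i, ((q i : ℕ) : ℤ) ≤ ∑ _i : Fin d, (M : ℤ) :=
            Finset.sum_le_sum (fun i _ => by have := (q i).2; omega)
        _ = d * M := by simp
    have hM0 : (0 : ℤ) ≤ M := by positivity
    have hdM : (0 : ℤ) ≤ d * M := by positivity
    refine (gk_vert d N n s hs y p (by nlinarith)).trans ?_
    apply gk_multi d N n s hs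
    have : s * (y - ((0 : Fin d → ZMod N), 2 * s * ((p : ℕ) : ℤ))).2
        = s * y.2 - (s * s) * (2 * (p : ℕ)) := by
      simp; ring
    rw [this, hss]
    linarith
  have h1 : ∑ p : ι, gk d N n y ≤ ∑ p : ι, ∑ T ∈ (Finset.univ : Finset (Fin d)).powerset,
      gk d N n (ψ T p) := Finset.sum_le_sum (fun p _ => hle p)
  rw [Finset.sum_comm] at h1
  have h2 : ∀ T ∈ (Finset.univ : Finset (Fin d)).powerset, ∑ p : ι, gk d N n (ψ T p) ≤ 1 := by
    intro T _
    rw [← gk_sum d N n, ← tsum_fintype (L := .unconditional _)]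
    exact ENNReal.tsum_comp_le_tsum_of_injective (hinj T) _
  have h3 := h1.trans (Finset.sum_le_sum h2)
  simp [ι] at h3
  rw [pow_succ']
  exact h3

/-- constant -/
def Bc (d : ℕ) : ℕ := (d + 2) ^ (d + 1) * 2 ^ d

lemma gk_bound (d N n r : ℕ) (hN : 1 ≤ N) (hr : r ≤ N) (y : Cyl d N) (hy : (r : ℤ) ≤ |y.2|) :
    (r : ℝ≥0∞) ^ (d + 1) * gk d N n y ≤ Bc d := by
  have hM : r / (d + 2) < N := by
    rcases Nat.eq_zero_or_pos r with h | h
    · subst h; simp; omega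
    · exact (Nat.div_lt_self h (by omega)).trans_le hr
  have h0 := gk_bound0 d N n (r / (d + 2)) hM y (by
    refine le_trans ?_ hy
    have := Nat.mul_div_le r (d + 2)
    exact_mod_cast this)
  have h1 : r ≤ (d + 2) * (r / (d + 2) + 1) := by
    have := Nat.lt_mul_div_succ r (show 0 < d + 2 by omega)
    exact this.le
  have h2 : (r : ℝ≥0∞) ≤ ((d + 2 : ℕ) : ℝ≥0∞) * (((r / (d + 2) : ℕ) : ℝ≥0∞) + 1) := by
    exact_mod_cast h1
  calc (r : ℝ≥0∞) ^ (d + 1) * gk d N n y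
      ≤ (((d + 2 : ℕ) : ℝ≥0∞) * (((r / (d + 2) : ℕ) : ℝ≥0∞) + 1)) ^ (d + 1) * gk d N n y := by
        gcongr
    _ = ((d + 2 : ℕ) : ℝ≥0∞) ^ (d + 1) * ((((r / (d + 2) : ℕ) : ℝ≥0∞) + 1) ^ (d + 1) * gk d N n y) := by
        rw [mul_pow, mul_assoc]
    _ ≤ ((d + 2 : ℕ) : ℝ≥0∞) ^ (d + 1) * 2 ^ d := by gcongr
    _ = Bc d := by unfold Bc; push_cast; rfl

/-- steps on cylinder -/
def stp (d N : ℕ) (k : Fin (d+1)) : Cyl d N := pj d N (bv d k)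

/-- averaging operator -/
noncomputable def av (d N : ℕ) (F : Cyl d N → ℝ≥0∞) (z : Cyl d N) : ℝ≥0∞ :=
  cst d * ∑ k, (F (z + stp d N k) + F (z - stp d N k))

/-- killed averaging operator -/
noncomputable def ko (d N : ℕ) (B : Set (Cyl d N)) (F : Cyl d N → ℝ≥0∞) (z : Cyl d N) : ℝ≥0∞ :=
  if z ∈ B then av d N F z else 0

variable {d N : ℕ} {B : Set (Cyl d N)}

lemma av_mono {F F' : Cyl d N → ℝ≥0∞} (h : ∀ z, F z ≤ F' z) (z : Cyl d N) :
    av d N F z ≤ av d N F' z := by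
  unfold av
  gcongr <;> apply h

lemma ko_mono {F F' : Cyl d N → ℝ≥0∞} (h : ∀ z, F z ≤ F' z) (z : Cyl d N) :
    ko d N B F z ≤ ko d N B F' z := by
  unfold ko
  split_ifs
  · exact av_mono h z
  · exact le_rfl

lemma koi_mono (n : ℕ) : ∀ {F F' : Cyl d N → ℝ≥0∞}, (∀ z, F z ≤ F' z) → ∀ z,
    (ko d N B)^[n] F z ≤ (ko d N B)^[n] F' z := by
  induction n with
  | zero => intro F F' h z; exact h z
  | succ n ih =>
    intro F F' h z
    exact ih (ko_mono h) z

lemma av_tsum {ι : Type*} (F : ι → Cyl d N → ℝ≥0∞) (z : Cyl d N) :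
    av d N (fun z => ∑' i, F i z) z = ∑' i, av d N (F i) z := by
  unfold av
  rw [ENNReal.tsum_mul_left, Summable.tsum_finsetSum (fun _ _ => ENNReal.summable)]
  simp only [ENNReal.tsum_add]

lemma ko_tsum {ι : Type*} (F : ι → Cyl d N → ℝ≥0∞) :
    ko d N B (fun z => ∑' i, F i z) = fun z => ∑' i, ko d N B (F i) z := by
  funext z
  unfold ko
  split_ifs
  · exact av_tsum F z
  · simp

lemma koi_tsum {ι : Type*} (n : ℕ) : ∀ (F : ι → Cyl d N → ℝ≥0∞),
    (ko d N B)^[n] (fun z => ∑' i, F i z) = fun z => ∑' i, (ko d N B)^[n] (F i) z := by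
  induction n with
  | zero => intro F; rfl
  | succ n ih =>
    intro F
    simp only [Function.iterate_succ, Function.comp]
    rw [ko_tsum, ih]

lemma ko_add (F F' : Cyl d N → ℝ≥0∞) :
    ko d N B (fun z => F z + F' z) = fun z => ko d N B F z + ko d N B F' z := by
  funext z
  unfold ko av
  split_ifs
  · rw [← mul_add, ← Finset.sum_add_distrib]
    congr 1; apply Finset.sum_congr rfl; intros; ring
  · simp

lemma koi_add (n : ℕ) : ∀ (F F' : Cyl d N → ℝ≥0∞),
    (ko d N B)^[n] (fun z => F z + F' z)
      = fun z => (ko d N B)^[n] F z + (ko d N B)^[n] F' z := by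
  induction n with
  | zero => intro F F'; rfl
  | succ n ih =>
    intro F F'
    simp only [Function.iterate_succ, Function.comp]
    rw [ko_add, ih]

lemma ko_smul (a : ℝ≥0∞) (F : Cyl d N → ℝ≥0∞) :
    ko d N B (fun z => a * F z) = fun z => a * ko d N B F z := by
  funext z
  unfold ko av
  split_ifs
  · simp only [← mul_add]
    rw [← Finset.mul_sum]
    ring
  · simp

lemma koi_smul (n : ℕ) (a : ℝ≥0∞) : ∀ (F : Cyl d N → ℝ≥0∞),
    (ko d N B)^[n] (fun z => a * F z) = fun z => a * (ko d N B)^[n] F z := by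
  induction n with
  | zero => intro F; rfl
  | succ n ih =>
    intro F
    simp only [Function.iterate_succ, Function.comp]
    rw [ko_smul, ih]

lemma koi_le_hk (n : ℕ) (F : Cyl d N → ℝ≥0∞) : ∀ z,
    (ko d N B)^[n] F z ≤ ∑' v, hk d n v * F (z + pj d N v) := by
  induction n with
  | zero =>
    intro z
    refine le_trans ?_ (ENNReal.le_tsum 0)
    simp [hk]
  | succ n ih =>
    intro z
    rw [Function.iterate_succ', Function.comp]
    have h1 : ko d N B ((ko d N B)^[n] F) z ≤ av d N ((ko d N B)^[n] F) z := by
      unfold ko; split_ifs <;> simp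
    refine h1.trans ((av_mono ih z).trans (le_of_eq ?_))
    unfold av
    simp only [hk]
    simp only [mul_assoc, ENNReal.tsum_mul_left, Finset.sum_mul]
    rw [Summable.tsum_finsetSum (fun _ _ => ENNReal.summable)]
    congr 1
    apply Finset.sum_congr rfl
    intro k _
    simp only [add_mul, ENNReal.tsum_add]
    congr 1
    · rw [← (Equiv.addRight (bv d k)).tsum_eq
        (fun v => hk d n (v - bv d k) * F (z + pj d N v))]
      congr 1; funext v
      simp only [Equiv.coe_addRight, add_sub_cancel_right, map_add, stp]
      congr 2; abel
    · rw [← (Equiv.subRight (bv d k)).tsum_eq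
        (fun v => hk d n (v + bv d k) * F (z + pj d N v))]
      congr 1; funext v
      simp only [Equiv.subRight_apply, sub_add_cancel, map_sub, stp]
      congr 2; abel

lemma koi_le_gk (n : ℕ) (F : Cyl d N → ℝ≥0∞) (z : Cyl d N) :
    (ko d N B)^[n] F z ≤ ∑' y, gk d N n (y - z) * F y := by
  refine (koi_le_hk n F z).trans (le_of_eq ?_)
  unfold gk
  simp only [← ENNReal.tsum_mul_right]
  rw [ENNReal.tsum_comm]
  congr 1; funext v
  rw [tsum_eq_single (z + pj d N v)]
  · simp
  · intro y hy
    rw [if_neg, zero_mul]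
    intro h; apply hy; rw [h]; abel

end


section
variable {d N : ℕ} 

lemma stp_castSucc_snd (i : Fin d) : (stp d N i.castSucc).2 = 0 := by
  rw [stp, pj_bv_castSucc]; rfl

lemma stp_last_snd : (stp d N (Fin.last d)).2 = 1 := by
  rw [stp, pj_bv_last]

/-- quadratic height function -/
noncomputable def ht (d N : ℕ) (j : ℤ) (z : Cyl d N) : ℕ :=
  (((d : ℤ) + 1) * ((2 * N) ^ 2 - (z.2 - j * N) ^ 2)).toNat

/-- height function restricted -/
noncomputable def hB (d N : ℕ) (j : ℤ) (z : Cyl d N) : ℝ≥0∞ :=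
  if z ∈ Btl d N j then (ht d N j z : ℝ≥0∞) else 0

lemma ht_cast (j : ℤ) (z : Cyl d N) (h1 : -(2 * N : ℤ) ≤ z.2 - j * N) (h2 : z.2 - j * N ≤ 2 * N) :
    (ht d N j z : ℤ) = ((d : ℤ) + 1) * ((2 * N) ^ 2 - (z.2 - j * N) ^ 2) := by
  unfold ht
  apply Int.toNat_of_nonneg
  apply mul_nonneg (by positivity)
  nlinarith

lemma ht_step (j : ℤ) (z : Cyl d N) (hz : z ∈ Btl d N j) :
    ∑ k, (ht d N j (z + stp d N k) + ht d N j (z - stp d N k)) + 2 * (d + 1)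
      = 2 * (d + 1) * ht d N j z := by
  obtain ⟨h1, h2⟩ := hz
  rw [Fin.sum_univ_castSucc]
  have e0 : ∀ w : Cyl d N, w.2 = z.2 → ht d N j w = ht d N j z := by
    intro w hw; unfold ht; rw [hw]
  have e1 : ∀ i : Fin d, ht d N j (z + stp d N i.castSucc) + ht d N j (z - stp d N i.castSucc)
      = 2 * ht d N j z := by
    intro i
    rw [e0 (z + _) (by simp [stp_castSucc_snd]), e0 (z - _) (by simp [stp_castSucc_snd])]; ring
  simp only [e1]
  have a0 := ht_cast (d := d) j z (by linarith) (by linarith)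
  have a1 := ht_cast (d := d) j (z + stp d N (Fin.last d))
    (by simp [stp_last_snd]; linarith) (by simp [stp_last_snd]; linarith)
  have a2 := ht_cast (d := d) j (z - stp d N (Fin.last d))
    (by simp [stp_last_snd]; linarith) (by simp [stp_last_snd]; linarith)
  zify
  rw [a0, a1, a2]
  simp [stp_last_snd]
  ring

lemma hB_le_ht (j : ℤ) (z : Cyl d N) : hB d N j z ≤ ht d N j z := by
  unfold hB; split_ifs <;> simp

lemma hB_le (j : ℤ) (z : Cyl d N) : hB d N j z ≤ ((4 * (d + 1) * N ^ 2 : ℕ) : ℝ≥0∞) := by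
  refine (hB_le_ht j z).trans ?_
  norm_cast
  unfold ht
  rw [Int.toNat_le]
  push_cast
  have : (0 : ℤ) ≤ (d + 1) * (z.2 - j * N) ^ 2 := by positivity
  linarith

lemma hB_step (j : ℤ) (z : Cyl d N) (hz : z ∈ Btl d N j) :
    1 + av d N (hB d N j) z ≤ hB d N j z := by
  have hc : cst d * (2 * ((d : ℝ≥0∞) + 1)) = 1 := by
    have := cst_mul d
    simpa [mul_comm] using this
  have h := ht_step j z hz
  calc 1 + av d N (hB d N j) z
      ≤ 1 + cst d * ∑ k, ((ht d N j (z + stp d N k) : ℝ≥0∞) + ht d N j (z - stp d N k)) := by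
        unfold av
        gcongr <;> apply hB_le_ht
    _ = cst d * ((∑ k, (ht d N j (z + stp d N k) + ht d N j (z - stp d N k)) + 2 * (d + 1) : ℕ) : ℝ≥0∞) := by
        push_cast
        rw [mul_add (cst d), hc, add_comm]
    _ = ht d N j z := by
        rw [h]; push_cast; rw [← mul_assoc, hc, one_mul]
    _ = hB d N j z := by unfold hB; rw [if_pos hz]

lemma tsum_shift (a : Cyl d N) (F : Cyl d N → ℝ≥0∞) : ∑' z, F (z + a) = ∑' z, F z := by
  have := (Equiv.addRight a).tsum_eq F
  simpa using this

lemma av_adj (F H : Cyl d N → ℝ≥0∞) : ∑' z, H z * av d N F z = ∑' z, av d N H z * F z := by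
  have e1 : ∀ z, H z * av d N F z
      = cst d * ∑ k, (H z * F (z + stp d N k) + H z * F (z - stp d N k)) := by
    intro z
    unfold av
    rw [mul_left_comm, Finset.mul_sum]
    simp only [mul_add]
  have e2 : ∀ z, av d N H z * F z
      = cst d * ∑ k, (H (z + stp d N k) * F z + H (z - stp d N k) * F z) := by
    intro z
    unfold av
    rw [mul_assoc, Finset.sum_mul]
    simp only [add_mul]
  simp only [e1, e2]
  rw [ENNReal.tsum_mul_left, ENNReal.tsum_mul_left,
    Summable.tsum_finsetSum (fun _ _ => ENNReal.summable),
    Summable.tsum_finsetSum (fun _ _ => ENNReal.summable)]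
  congr 1
  apply Finset.sum_congr rfl
  intro k _
  rw [ENNReal.tsum_add, ENNReal.tsum_add, add_comm]
  congr 1
  · rw [← tsum_shift (stp d N k)]; simp
  · rw [← tsum_shift (-stp d N k)]; simp [sub_eq_add_neg]

lemma ko_sum_step (j : ℤ) (F : Cyl d N → ℝ≥0∞) (hF : ∀ z, z ∉ Btl d N j → F z = 0) :
    ∑' z, F z + ∑' z, hB d N j z * ko d N (Btl d N j) F z ≤ ∑' z, hB d N j z * F z := by
  have e : ∀ z, hB d N j z * ko d N (Btl d N j) F z = hB d N j z * av d N F z := by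
    intro z
    unfold hB ko
    split_ifs <;> simp
  simp only [e]
  rw [av_adj, ← ENNReal.tsum_add]
  apply ENNReal.tsum_le_tsum
  intro z
  by_cases hz : z ∈ Btl d N j
  · calc F z + av d N (hB d N j) z * F z = (1 + av d N (hB d N j) z) * F z := by ring
      _ ≤ _ := by gcongr; exact hB_step j z hz
  · rw [hF z hz]; simp

lemma koi_supp (j : ℤ) (F : Cyl d N → ℝ≥0∞) (hF : ∀ z, z ∉ Btl d N j → F z = 0) (n : ℕ) :
    ∀ z, z ∉ Btl d N j → (ko d N (Btl d N j))^[n] F z = 0 := by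
  cases n with
  | zero => exact hF
  | succ n =>
    intro z hz
    rw [Function.iterate_succ', Function.comp]
    unfold ko; rw [if_neg hz]

lemma koi_sum (j : ℤ) (F : Cyl d N → ℝ≥0∞) (hF : ∀ z, z ∉ Btl d N j → F z = 0) (n : ℕ) :
    ∑ i ∈ Finset.range n, ∑' z, (ko d N (Btl d N j))^[i] F z
      + ∑' z, hB d N j z * (ko d N (Btl d N j))^[n] F z ≤ ∑' z, hB d N j z * F z := by
  induction n with
  | zero => simp
  | succ n ih =>
    refine le_trans ?_ ih
    rw [Finset.sum_range_succ, add_assoc, Function.iterate_succ']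
    gcongr
    exact ko_sum_step j _ (koi_supp j F hF n)

/-- Green function of the killed walk -/
noncomputable def Gr (d N : ℕ) (j : ℤ) (x z : Cyl d N) : ℝ≥0∞ :=
  ∑' n, (ko d N (Btl d N j))^[n] (fun y => if y = x then 1 else 0) z

lemma Gr_sum (j : ℤ) (x : Cyl d N) (hx : x ∈ Btl d N j) :
    ∑' z, Gr d N j x z ≤ ((4 * (d + 1) * N ^ 2 : ℕ) : ℝ≥0∞) := by
  unfold Gr
  rw [ENNReal.tsum_comm, ENNReal.tsum_eq_iSup_nat]
  apply iSup_le
  intro n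
  refine le_trans (le_trans le_self_add (koi_sum j _ ?_ n)) ?_
  · intro z hz
    rw [if_neg]; rintro rfl; exact hz hx
  · simp
    exact_mod_cast hB_le j x

lemma koi_one_sum (j : ℤ) (n : ℕ) (z : Cyl d N) :
    ∑ i ∈ Finset.range n, (ko d N (Btl d N j))^[i + 1] (fun _ => 1) z
      + (ko d N (Btl d N j))^[n] (hB d N j) z ≤ hB d N j z := by
  induction n with
  | zero => simp
  | succ n ih =>
    refine le_trans ?_ ih
    rw [Finset.sum_range_succ, add_assoc]
    gcongr
    rw [Function.iterate_succ, Function.comp, Function.comp]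
    have := koi_add (B := Btl d N j) n (ko d N (Btl d N j) (fun _ => 1))
      (ko d N (Btl d N j) (hB d N j))
    rw [← congrFun this z]
    apply koi_mono
    intro y
    unfold ko
    split_ifs with hy
    · refine le_trans ?_ (hB_step j y hy)
      gcongr
      unfold av
      have := cst_mul d
      norm_num at this ⊢
      rw [this]
    · simp

lemma av_one (z : Cyl d N) : av d N (fun _ => 1) z = 1 := by
  unfold av
  have := cst_mul d
  norm_num at this ⊢
  rw [this]

lemma koi_one_anti (j : ℤ) (n m : ℕ) (h : n ≤ m) (z : Cyl d N) :
    (ko d N (Btl d N j))^[m] (fun _ => 1) z ≤ (ko d N (Btl d N j))^[n] (fun _ => 1) z := by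
  induction m, h using Nat.le_induction with
  | base => exact le_rfl
  | succ m _ ih =>
    refine le_trans ?_ ih
    rw [Function.iterate_succ, Function.comp]
    apply koi_mono
    intro y
    unfold ko
    split_ifs
    · rw [av_one]
    · simp

lemma koi_one_le (j : ℤ) (n : ℕ) (z : Cyl d N) :
    (n : ℝ≥0∞) * (ko d N (Btl d N j))^[n] (fun _ => 1) z
      ≤ ((4 * (d + 1) * N ^ 2 : ℕ) : ℝ≥0∞) := by
  refine le_trans ?_ ((le_self_add.trans (koi_one_sum j n z)).trans (hB_le j z))
  calc (n : ℝ≥0∞) * (ko d N (Btl d N j))^[n] (fun _ => 1) z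
      = ∑ i ∈ Finset.range n, (ko d N (Btl d N j))^[n] (fun _ => 1) z := by simp
    _ ≤ _ := by
      apply Finset.sum_le_sum
      intro i hi
      apply koi_one_anti
      have := Finset.mem_range.mp hi
      omega

/-- constants -/
def Kc (d : ℕ) : ℕ := 8 * (d + 1) * 3 ^ (d + 1)
/-- constants -/
def C1 (d : ℕ) : ℕ := 4 * 3 ^ (d + 1) * Bc d
/-- constants -/
def C0 (d : ℕ) : ℕ := Kc d * C1 d

lemma Gr_split (j : ℤ) (x z : Cyl d N) (L : ℕ) :
    Gr d N j x z = ∑ n ∈ Finset.range L,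
        (ko d N (Btl d N j))^[n] (fun y => if y = x then 1 else 0) z
      + (ko d N (Btl d N j))^[L] (Gr d N j x) z := by
  have h : Gr d N j x = fun z => ∑' n, (ko d N (Btl d N j))^[n] (fun y => if y = x then 1 else 0) z :=
    rfl
  rw [h, koi_tsum]
  simp only [← Function.iterate_add_apply]
  simp only [add_comm L]
  exact (Summable.sum_add_tsum_nat_add'
    (f := fun n => (ko d N (Btl d N j))^[n] (fun y => if y = x then 1 else 0) z)
    (ENNReal.summable)).symm

lemma koi_far (j : ℤ) (n r : ℕ) (hN : 1 ≤ N) (hr : r ≤ N) (z : Cyl d N) (F : Cyl d N → ℝ≥0∞)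
    (hF : ∀ y, F y ≠ 0 → (r : ℤ) ≤ |y.2 - z.2|) :
    (r : ℝ≥0∞) ^ (d + 1) * (ko d N (Btl d N j))^[n] F z ≤ Bc d * ∑' y, F y := by
  calc (r : ℝ≥0∞) ^ (d + 1) * (ko d N (Btl d N j))^[n] F z
      ≤ (r : ℝ≥0∞) ^ (d + 1) * ∑' y, gk d N n (y - z) * F y := by
        gcongr; exact koi_le_gk n F z
    _ = ∑' y, ((r : ℝ≥0∞) ^ (d + 1) * gk d N n (y - z)) * F y := by
        rw [← ENNReal.tsum_mul_left]; simp only [mul_assoc]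
    _ ≤ ∑' y, Bc d * F y := by
        apply ENNReal.tsum_le_tsum
        intro y
        by_cases h : F y = 0
        · simp [h]
        · gcongr
          exact gk_bound d N n r hN hr _ (hF y h)
    _ = _ := ENNReal.tsum_mul_left

lemma arith_aux (T b e M : ℕ) (hT : 1 ≤ T) :
    T * (8 * e * T * M * b + (4 * T * b * (4 * e * M) + b * (4 * e * M)))
      ≤ 8 * e * T * (4 * T * b) * M := by
  have : T * b * e * M * T ≥ T * b * e * M * 1 := by gcongr
  have h2 : 0 ≤ T * b * e * M := Nat.zero_le _
  nlinarith

lemma Gr_bound (j : ℤ) (hN : 1 ≤ N) (x : Cyl d N) (hx : x ∈ Btl d N j) (r : ℕ) :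
    1 ≤ r → r ≤ N → ∀ z : Cyl d N, (r : ℤ) ≤ |z.2 - x.2| →
    (r : ℝ≥0∞) ^ (d + 1) * Gr d N j x z ≤ ((C0 d * N ^ 2 : ℕ) : ℝ≥0∞) := by
  have hBc : 1 ≤ Bc d := Nat.one_le_iff_ne_zero.mpr (by unfold Bc; positivity)
  induction r using Nat.strong_induction_on with
  | _ r ih =>
  intro hr1 hrN z hz
  rcases hr1.eq_or_lt with h1 | h1
  · subst h1
    simp only [Nat.cast_one, one_pow, one_mul]
    refine (ENNReal.le_tsum z).trans ((Gr_sum j x hx).trans ?_)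
    norm_cast
    gcongr
    unfold C0 C1 Kc
    have : 1 ≤ 3 ^ (d + 1) * (4 * 3 ^ (d+1) * Bc d) :=
      Nat.one_le_iff_ne_zero.mpr (by positivity)
    calc 4 * (d + 1) ≤ 8 * (d + 1) * 1 := by linarith
      _ ≤ 8 * (d + 1) * (3 ^ (d + 1) * (4 * 3 ^ (d+1) * Bc d)) := by gcongr
      _ = _ := by ring
  · obtain ⟨q, hq1, hq2, hq3, hq4⟩ : ∃ q : ℕ, 1 ≤ q ∧ q < r ∧ r ≤ 3 * q ∧ 2 * q ≤ r :=
      ⟨r / 2, by omega, by omega, by omega, by omega⟩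
    have hfar := ih q hq2 hq1 (by omega)
    set L := Kc d * N ^ 2 with hL
    set δ : Cyl d N → ℝ≥0∞ := fun y => if y = x then 1 else 0 with hδ
    have hδs : ∑' y, δ y = 1 := by simp [hδ]
    have t1 : (q : ℝ≥0∞) ^ (d + 1) * ∑ n ∈ Finset.range L, (ko d N (Btl d N j))^[n] δ z
        ≤ (L : ℝ≥0∞) * Bc d := by
      rw [Finset.mul_sum]
      calc _ ≤ ∑ n ∈ Finset.range L, (Bc d : ℝ≥0∞) := by
            apply Finset.sum_le_sum
            intro n _
            refine (koi_far j n q hN (by omega) z δ ?_).trans ?_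
            · intro y hy
              have : y = x := by by_contra h; simp [hδ, h] at hy
              subst this
              rw [abs_sub_comm]; omega
            · rw [hδs, mul_one]
        _ = _ := by simp
    let Gn : Cyl d N → ℝ≥0∞ := fun y => if |y.2 - x.2| < q then Gr d N j x y else 0
    have hGn : ∑' y, Gn y ≤ ((4 * (d + 1) * N ^ 2 : ℕ) : ℝ≥0∞) := by
      refine le_trans (ENNReal.tsum_le_tsum ?_) (Gr_sum j x hx)
      intro y; simp only [Gn]; split_ifs <;> simp
    have t2 : (q : ℝ≥0∞) ^ (d + 1) * (ko d N (Btl d N j))^[L] (Gr d N j x) z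
        ≤ ((C0 d * N ^ 2 : ℕ) : ℝ≥0∞) * (ko d N (Btl d N j))^[L] (fun _ => 1) z
          + Bc d * ((4 * (d + 1) * N ^ 2 : ℕ) : ℝ≥0∞) := by
      have a1 := congrFun (koi_smul (B := Btl d N j) L ((q : ℝ≥0∞) ^ (d + 1)) (Gr d N j x)) z
      rw [← a1]
      have a2 : ∀ y, (q : ℝ≥0∞) ^ (d + 1) * Gr d N j x y
          ≤ ((C0 d * N ^ 2 : ℕ) : ℝ≥0∞) * 1 + (q : ℝ≥0∞) ^ (d + 1) * Gn y := by
        intro y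
        by_cases hy : |y.2 - x.2| < q
        · simp only [Gn, if_pos hy]; exact le_add_self
        · refine le_trans ?_ le_self_add
          rw [mul_one]
          exact hfar y (by omega)
      refine (koi_mono L a2 z).trans ?_
      rw [koi_add L (fun y => ((C0 d * N ^ 2 : ℕ) : ℝ≥0∞) * 1)]
      rw [koi_smul L _ (fun _ => 1), koi_smul]
      refine add_le_add le_rfl ?_
      refine (koi_far j L q hN (by omega) z Gn ?_).trans ?_
      · intro y hy
        have : |y.2 - x.2| < q := by by_contra h; simp [Gn, h] at hy
        have := abs_sub_le z.2 y.2 x.2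
        rw [abs_sub_comm]
        omega
      · gcongr
    have t3 : ((C0 d * N ^ 2 : ℕ) : ℝ≥0∞) * (ko d N (Btl d N j))^[L] (fun _ => 1) z
        ≤ ((C1 d * (4 * (d + 1) * N ^ 2) : ℕ) : ℝ≥0∞) := by
      have := koi_one_le j L z
      have e : C0 d * N ^ 2 = C1 d * L := by rw [hL]; unfold C0; ring
      rw [e, Nat.cast_mul, mul_assoc, Nat.cast_mul (C1 d)]
      gcongr
    have hfin : 3 ^ (d + 1) * (L * Bc d + (C1 d * (4 * (d + 1) * N ^ 2)
        + Bc d * (4 * (d + 1) * N ^ 2))) ≤ C0 d * N ^ 2 := by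
      rw [hL]; unfold C0 C1 Kc
      exact arith_aux _ _ _ _ (Nat.one_le_iff_ne_zero.mpr (by positivity))
    rw [Gr_split j x z L]
    calc (r : ℝ≥0∞) ^ (d + 1) * (∑ n ∈ Finset.range L, (ko d N (Btl d N j))^[n] δ z
          + (ko d N (Btl d N j))^[L] (Gr d N j x) z)
        ≤ (3 * q : ℝ≥0∞) ^ (d + 1) * (∑ n ∈ Finset.range L, (ko d N (Btl d N j))^[n] δ z
          + (ko d N (Btl d N j))^[L] (Gr d N j x) z) := by
          gcongr
          exact_mod_cast hq3
      _ = 3 ^ (d + 1) * ((q : ℝ≥0∞) ^ (d + 1) * ∑ n ∈ Finset.range L, (ko d N (Btl d N j))^[n] δ z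
          + (q : ℝ≥0∞) ^ (d + 1) * (ko d N (Btl d N j))^[L] (Gr d N j x) z) := by
          rw [mul_pow]; ring
      _ ≤ 3 ^ (d + 1) * ((L : ℝ≥0∞) * Bc d + (((C1 d * (4 * (d + 1) * N ^ 2) : ℕ) : ℝ≥0∞)
            + Bc d * ((4 * (d + 1) * N ^ 2 : ℕ) : ℝ≥0∞))) := by
          gcongr
          exact t2.trans (by gcongr)
      _ ≤ _ := by exact_mod_cast hfin

end


section
variable {d N : ℕ} 

lemma pj_apply (v : Lat d) : pj d N v = projE d N v := rfl

lemma stepProb_eq (x y : Cyl d N) : stepProb d N x y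
    = cst d * ∑ k, ((if x + stp d N k = y then 1 else 0) + (if x - stp d N k = y then 1 else 0)) := by
  unfold stepProb cst
  rw [ENNReal.div_eq_inv_mul]
  congr 1
  rw [Finset.card_filter, unitVecs, Finset.sum_image]
  · rw [Fintype.sum_prod_type]
    push_cast
    apply Finset.sum_congr rfl
    intro k _
    rw [Fintype.sum_bool]
    have e1 : projE d N (Pi.single k 1) = stp d N k := rfl
    have e2 : projE d N (Pi.single k (-1)) = - stp d N k := by
      rw [stp, ← map_neg, ← pj_apply]
      congr 1
      simp [bv, Pi.single_neg]
    simp [e1, e2, sub_eq_add_neg]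
  · rintro ⟨k, b⟩ _ ⟨k', b'⟩ _ h
    have h1 := congrFun h k
    have h2 := congrFun h k'
    simp [Pi.single_apply] at h1 h2
    have hk : k = k' := by
      by_contra hne
      rw [if_neg hne] at h1
      split_ifs at h1 <;> simp at h1
    subst hk
    simp at h1
    cases b <;> cases b' <;> simp at h1 ⊢

/-- prepend a point to a path -/
def consP {X : Type*} (x : X) (ω : ℕ → X) : ℕ → X
  | 0 => x
  | n + 1 => ω n

lemma measurable_consP (x : Cyl d N) : Measurable (consP x) := by
  rw [measurable_pi_iff]
  intro n
  cases n with
  | zero => exact measurable_const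
  | succ n => exact measurable_pi_apply n

/-- cylinder event -/
def cylE {X : Type*} (n : ℕ) (γ : ℕ → X) : Set (ℕ → X) := {ω | ∀ i ≤ n, ω i = γ i}

/-- dependence on the first coordinates -/
def Dep {X Y : Type*} (n : ℕ) (f : (ℕ → X) → Y) : Prop :=
  ∀ ω ω', (∀ i ≤ n, ω i = ω' i) → f ω = f ω'

lemma Dep.measurable {Y : Type*} [MeasurableSpace Y] {n : ℕ} {f : (ℕ → Cyl d N) → Y}
    (hf : Dep n f) : Measurable f := by
  let r : (ℕ → Cyl d N) → (Fin (n+1) → Cyl d N) := fun ω i => ω i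
  let e : (Fin (n+1) → Cyl d N) → (ℕ → Cyl d N) := fun η i =>
    if h : i < n + 1 then η ⟨i, h⟩ else 0
  have hr : Measurable r := by
    rw [measurable_pi_iff]; intro i; exact measurable_pi_apply _
  have : f = (f ∘ e) ∘ r := by
    funext ω
    apply hf
    intro i hi
    simp [e, r]
    intro h; omega
  rw [this]
  exact (measurable_of_countable _).comp hr

lemma measurableSet_cylE (n : ℕ) (γ : ℕ → Cyl d N) : MeasurableSet (cylE n γ) := by
  have : Dep n (fun ω : ℕ → Cyl d N => ω ∈ cylE n γ) := by
    intro ω ω' h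
    simp only [cylE, Set.mem_ofPred_eq, eq_iff_iff]
    exact forall₂_congr (fun i hi => by rw [h i hi])
  exact measurableSet_setOfPred.mpr this.measurable

lemma generate_cylE : (inferInstance : MeasurableSpace (ℕ → Cyl d N)) =
    MeasurableSpace.generateFrom {S | ∃ n γ, S = cylE (X := Cyl d N) n γ} := by
  apply le_antisymm
  · refine iSup_le ?_
    intro n
    rintro _ ⟨s, -, rfl⟩
    have : (fun ω : ℕ → Cyl d N => ω n) ⁻¹' s
        = ⋃ η : {η : Fin (n+1) → Cyl d N // η (Fin.last n) ∈ s},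
          cylE n (fun i => if h : i < n + 1 then η.1 ⟨i, h⟩ else 0) := by
      ext ω
      simp only [Set.mem_preimage, Set.mem_iUnion, cylE, Set.mem_ofPred_eq]
      constructor
      · intro h
        refine ⟨⟨fun i => ω i, h⟩, ?_⟩
        intro i hi
        simp [Nat.lt_succ_of_le hi]
      · rintro ⟨⟨η, hη⟩, h⟩
        have := h n le_rfl
        simp at this
        rw [this]; exact hη
    rw [this]
    apply @MeasurableSet.iUnion _ _ (_) _
    intro η
    exact MeasurableSpace.measurableSet_generateFrom ⟨_, _, rfl⟩
  · apply MeasurableSpace.generateFrom_le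
    rintro S ⟨n, γ, rfl⟩
    exact measurableSet_cylE n γ

lemma pi_cylE : IsPiSystem {S | ∃ n γ, S = cylE (X := Cyl d N) n γ} := by
  have key : ∀ n γ n' γ', n ≤ n' → (cylE (X := Cyl d N) n γ ∩ cylE n' γ').Nonempty →
      cylE (X := Cyl d N) n γ ∩ cylE n' γ' = cylE n' γ' := by
    rintro n γ n' γ' hn ⟨ω, h1, h2⟩
    apply Set.inter_eq_right.mpr
    intro ω' h' i hi
    rw [h' i (hi.trans hn), ← h2 i (hi.trans hn), h1 i hi]
  rintro _ ⟨n, γ, rfl⟩ _ ⟨n', γ', rfl⟩ hne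
  rcases le_total n n' with h | h
  · exact ⟨n', γ', key n γ n' γ' h hne⟩
  · rw [Set.inter_comm] at hne ⊢
    exact ⟨n, γ, key n' γ' n γ h hne⟩

variable {Pl : Cyl d N → Measure (ℕ → Cyl d N)}

lemma consP_preimage_zero (x : Cyl d N) (γ : ℕ → Cyl d N) :
    consP x ⁻¹' cylE 0 γ = if γ 0 = x then Set.univ else ∅ := by
  ext ω
  split_ifs with h
  · simp [cylE, consP, h]
  · simp [cylE, consP, Ne.symm h]

lemma consP_preimage_succ (x : Cyl d N) (n : ℕ) (γ : ℕ → Cyl d N) :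
    consP x ⁻¹' cylE (n+1) γ = if γ 0 = x then cylE n (fun i => γ (i+1)) else ∅ := by
  ext ω
  split_ifs with h
  · simp only [cylE, Set.mem_preimage, Set.mem_ofPred_eq]
    constructor
    · intro hh i hi; exact hh (i+1) (by omega)
    · intro hh i hi
      cases i with
      | zero => exact h.symm
      | succ i => exact hh i (by omega)
  · simp only [cylE, Set.mem_preimage, Set.mem_ofPred_eq, Set.mem_empty_iff_false, iff_false]
    intro hh
    exact h (hh 0 (by omega)).symm

lemma one_step_measure (hP : IsCylRW d N Pl) (x : Cyl d N) :
    Pl x = cst d • ∑ k, ((Pl (x + stp d N k)).map (consP x) + (Pl (x - stp d N k)).map (consP x)) := by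
  have := hP.1
  have hm := measurable_consP x
  have hprob : ∀ y, IsProbabilityMeasure ((Pl y).map (consP x)) :=
    fun y => Measure.isProbabilityMeasure_map hm.aemeasurable
  have hval : ∀ S, MeasurableSet S → (cst d • ∑ k, ((Pl (x + stp d N k)).map (consP x)
      + (Pl (x - stp d N k)).map (consP x))) S
      = cst d * ∑ k, (Pl (x + stp d N k) (consP x ⁻¹' S) + Pl (x - stp d N k) (consP x ⁻¹' S)) := by
    intro S hS
    simp [Measure.map_apply hm hS]
  have huniv : ∀ y, Pl y Set.univ = 1 := fun y => measure_univ
  apply ext_of_generate_finite _ generate_cylE pi_cylE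
  · rintro _ ⟨n, γ, rfl⟩
    rw [hval _ (measurableSet_cylE n γ)]
    have hx := hP.2 x n γ
    change Pl x (cylE n γ) = _ at hx
    rw [hx]
    cases n with
    | zero =>
      rw [consP_preimage_zero]
      split_ifs with h
      · simp only [huniv]
        have := cst_mul d
        norm_num at this ⊢
        rw [this]
      · simp
    | succ n =>
      rw [consP_preimage_succ]
      split_ifs with h
      · have hc : ∀ y, Pl y (cylE n (fun i => γ (i+1))) = _ := fun y => hP.2 y n (fun i => γ (i+1))
        simp only [hc]
        rw [Finset.prod_range_succ', one_mul, stepProb_eq]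
        simp only [← add_mul]
        rw [← Finset.sum_mul, mul_comm]
        simp only [zero_add, h, mul_assoc, eq_comm]
      · simp
  · rw [hval _ MeasurableSet.univ]
    simp only [Set.preimage_univ, huniv]
    have := cst_mul d
    norm_num at this ⊢
    rw [this]

lemma one_step (hP : IsCylRW d N Pl) (x : Cyl d N) (F : (ℕ → Cyl d N) → ℝ≥0∞) (hF : Measurable F) :
    ∫⁻ ω, F ω ∂(Pl x) = av d N (fun y => ∫⁻ ω, F (consP x ω) ∂(Pl y)) x := by
  conv_lhs => rw [one_step_measure hP x]
  rw [lintegral_smul_measure, lintegral_finsetSum_measure]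
  unfold av
  simp only [lintegral_add_measure, lintegral_map hF (measurable_consP x), smul_eq_mul]

lemma ae_start (hP : IsCylRW d N Pl) (x : Cyl d N) : ∀ᵐ ω ∂(Pl x), ω 0 = x := by
  have := hP.1
  have h := hP.2 x 0 (fun _ => x)
  simp at h
  rw [← prob_compl_eq_zero_iff] at h
  · exact h
  · exact measurableSet_eq_fun (measurable_pi_apply 0) measurable_const

/-- shift -/
def shf {X : Type*} (n : ℕ) (ω : ℕ → X) : ℕ → X := fun k => ω (k + n)

lemma measurable_shf (n : ℕ) : Measurable (shf (X := Cyl d N) n) := by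
  rw [measurable_pi_iff]; intro k; exact measurable_pi_apply _

lemma measurable_kernel (F : (ℕ → Cyl d N) → ℝ≥0∞) (n : ℕ) :
    Measurable (fun ω : ℕ → Cyl d N => ∫⁻ ω', F ω' ∂(Pl (ω n))) :=
  (measurable_of_countable (fun y => ∫⁻ ω', F ω' ∂(Pl y))).comp (measurable_pi_apply n)

lemma markov (hP : IsCylRW d N Pl) (G : (ℕ → Cyl d N) → ℝ≥0∞) (hG : Measurable G) (n : ℕ) :
    ∀ (f : (ℕ → Cyl d N) → ℝ≥0∞), Dep n f → ∀ x,
    ∫⁻ ω, f ω * G (shf n ω) ∂(Pl x) = ∫⁻ ω, f ω * (∫⁻ ω', G ω' ∂(Pl (ω n))) ∂(Pl x) := by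
  have := hP.1
  induction n with
  | zero =>
    intro f hf x
    have h1 : ∀ᵐ ω ∂(Pl x), f ω * G (shf 0 ω) = f (fun _ => x) * G ω := by
      filter_upwards [ae_start hP x] with ω hω
      rw [hf ω (fun _ => x) (by intro i hi; rw [Nat.le_zero.mp hi]; exact hω)]
      rfl
    have h2 : ∀ᵐ ω ∂(Pl x), f ω * (∫⁻ ω', G ω' ∂(Pl (ω 0)))
        = f (fun _ => x) * (∫⁻ ω', G ω' ∂(Pl x)) := by
      filter_upwards [ae_start hP x] with ω hω
      rw [hf ω (fun _ => x) (by intro i hi; rw [Nat.le_zero.mp hi]; exact hω), hω]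
    rw [lintegral_congr_ae h1, lintegral_congr_ae h2, lintegral_const_mul _ hG]
    simp
  | succ n ih =>
    intro f hf x
    have hd : Dep n (fun ω => f (consP x ω)) := by
      intro ω ω' h
      apply hf
      intro i hi
      cases i with
      | zero => rfl
      | succ i => exact h i (by omega)
    rw [one_step hP x (fun ω => f ω * G (shf (n+1) ω)) (hf.measurable.mul (hG.comp (measurable_shf _))),
      one_step hP x (fun ω => f ω * ∫⁻ ω', G ω' ∂(Pl (ω (n+1)))) (hf.measurable.mul (measurable_kernel G _))]
    congr 1
    funext y
    exact ih _ hd y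

end


section
section
variable {d N : ℕ}

lemma entT_lt {X : Type*} (U : Set X) (ω : ℕ → X) (t : ℕ∞) :
    entT U ω < t ↔ ∃ n : ℕ, ω n ∈ U ∧ (n : ℕ∞) < t := by
  unfold entT
  rw [sInf_lt_iff]
  constructor
  · rintro ⟨_, ⟨n, h, rfl⟩, h2⟩; exact ⟨n, h, h2⟩
  · rintro ⟨n, h, h2⟩; exact ⟨_, ⟨n, h, rfl⟩, h2⟩

lemma le_entT {X : Type*} (U : Set X) (ω : ℕ → X) (t : ℕ∞) :
    t ≤ entT U ω ↔ ∀ n : ℕ, (n : ℕ∞) < t → ω n ∉ U := by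
  rw [← not_lt, entT_lt]
  push Not
  constructor
  · intro h n hn hU; exact absurd hn (not_lt.mpr (h n hU))
  · intro h n hn; by_contra hc; exact h n (not_le.mp hc) hn

lemma entT_eq {X : Type*} (U : Set X) (ω : ℕ → X) (n : ℕ) :
    entT U ω = n ↔ ω n ∈ U ∧ ∀ i < n, ω i ∉ U := by
  constructor
  · intro h
    have h1 : ∀ i < n, ω i ∉ U := fun i hi =>
      (le_entT U ω n).mp h.ge i (by exact_mod_cast hi)
    refine ⟨?_, h1⟩
    have : entT U ω < ((n+1 : ℕ) : ℕ∞) := by rw [h]; exact_mod_cast Nat.lt_succ_self n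
    obtain ⟨m, hm, hm2⟩ := (entT_lt _ _ _).mp this
    have hm3 : m < n + 1 := by exact_mod_cast hm2
    have : m = n := by
      by_contra hne
      exact h1 m (by omega) hm
    rwa [← this]
  · rintro ⟨h1, h2⟩
    apply le_antisymm
    · exact sInf_le ⟨n, h1, rfl⟩
    · rw [le_entT]; intro i hi; exact h2 i (by exact_mod_cast hi)

lemma lt_exitT {X : Type*} (U : Set X) (ω : ℕ → X) (n : ℕ) :
    (n : ℕ∞) < exitT U ω ↔ ∀ i ≤ n, ω i ∈ U := by
  unfold exitT
  rw [← ENat.add_one_le_iff (ENat.natCast_ne_top n), le_entT]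
  constructor
  · intro h i hi
    by_contra hc
    exact h i (by exact_mod_cast Nat.lt_succ_of_le hi) hc
  · intro h i hi hc
    have : i < n + 1 := by exact_mod_cast hi
    exact hc (h i (by omega))

lemma after_top {X : Type*} (f : (ℕ → X) → ℕ∞) (ω : ℕ → X) : after ⊤ f ω = ⊤ := rfl

lemma after_coe {X : Type*} (m : ℕ) (f : (ℕ → X) → ℕ∞) (ω : ℕ → X) :
    after (m : ℕ∞) f ω = m + f (shf m ω) := rfl

lemma shf_shf {X : Type*} (m n : ℕ) (ω : ℕ → X) : shf n (shf m ω) = shf (m + n) ω := by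
  funext k; simp only [shf]; congr 1; omega

/-- stopping time property -/
def IsST {X : Type*} (τ : (ℕ → X) → ℕ∞) : Prop :=
  ∀ (n : ℕ) ω ω', (∀ i ≤ n, ω i = ω' i) → τ ω = n → τ ω' = n

lemma isST_entT {X : Type*} (U : Set X) : IsST (entT U) := by
  intro n ω ω' h h1
  rw [entT_eq] at h1 ⊢
  refine ⟨by rw [← h n le_rfl]; exact h1.1, fun i hi => ?_⟩
  rw [← h i hi.le]; exact h1.2 i hi

lemma IsST.after {X : Type*} {σ ρ : (ℕ → X) → ℕ∞} (h1 : IsST σ) (h2 : IsST ρ) :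
    IsST (fun ω => after (σ ω) ρ ω) := by
  intro n ω ω' h h3
  dsimp only at h3 ⊢
  cases hs : σ ω with
  | top => rw [hs, after_top] at h3; exact absurd h3.symm (ENat.natCast_ne_top n)
  | coe m =>
    rw [hs, after_coe] at h3
    cases hr : ρ (shf m ω) with
    | top => rw [hr] at h3; exact absurd h3.symm (by simp)
    | coe p =>
      rw [hr] at h3
      have h4 : m + p = n := by exact_mod_cast h3
      rw [h1 m ω ω' (fun i hi => h i (by omega)) hs, after_coe,
        h2 p (shf m ω) (shf m ω') (fun i hi => h (i+m) (by omega)) hr]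
      exact_mod_cast h4

lemma IsST.iff {X : Type*} {τ : (ℕ → X) → ℕ∞} (h : IsST τ) {n : ℕ} {ω ω' : ℕ → X}
    (hω : ∀ i ≤ n, ω i = ω' i) : τ ω = n ↔ τ ω' = n :=
  ⟨h n ω ω' hω, h n ω' ω (fun i hi => (hω i hi).symm)⟩

lemma isST_oneExc (j : ℤ) : IsST (oneExc d N j) :=
  (isST_entT _).after (isST_entT _)

lemma isST_DD (j : ℤ) (k : ℕ) : IsST (DD d N j k) := by
  induction k with
  | zero => intro n ω ω' _ h; exact h
  | succ k ih => exact ih.after (isST_oneExc j)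

lemma DD_one (j : ℤ) (ω : ℕ → Cyl d N) : DD d N j 1 ω = oneExc d N j ω := by
  change after ((0:ℕ) : ℕ∞) _ ω = _
  rw [after_coe]
  change _ + oneExc d N j ω = _
  simp

lemma DD_succ' (j : ℤ) (k : ℕ) : ∀ ω : ℕ → Cyl d N,
    DD d N j (k+1) ω = after (oneExc d N j ω) (DD d N j k) ω := by
  induction k with
  | zero =>
    intro ω
    rw [DD_one]
    cases h : oneExc d N j ω with
    | top => rfl
    | coe m => rw [after_coe]; simp [DD]
  | succ k ih =>
    intro ω
    change after (DD d N j (k+1) ω) (oneExc d N j) ω = _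
    rw [ih ω]
    cases h : oneExc d N j ω with
    | top => rfl
    | coe m =>
      rw [after_coe, after_coe]
      change _ = _ + after (DD d N j k (shf m ω)) (oneExc d N j) (shf m ω)
      cases h2 : DD d N j k (shf m ω) with
      | top => simp [after_top]
      | coe p =>
        rw [after_coe, shf_shf, ← Nat.cast_add, after_coe]
        push_cast
        rw [add_assoc]

/-- exponential weight -/
noncomputable def wt (lam : ℝ) (A : Finset (Cyl d N)) (t : ℕ∞) (ω : ℕ → Cyl d N) : ℝ≥0∞ :=
  ENNReal.ofReal (Real.exp (lam * ∑ x ∈ A, if entT {x} ω < t then (1:ℝ) else 0))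

variable {lam : ℝ} {A : Finset (Cyl d N)}

lemma one_le_wt (hl : 0 ≤ lam) (t : ℕ∞) (ω : ℕ → Cyl d N) : 1 ≤ wt lam A t ω := by
  unfold wt
  rw [ENNReal.one_le_ofReal, Real.one_le_exp_iff]
  apply mul_nonneg hl
  apply Finset.sum_nonneg
  intro x _
  split_ifs <;> norm_num

lemma wt_le (hl : 0 ≤ lam) (t : ℕ∞) (ω : ℕ → Cyl d N) :
    wt lam A t ω ≤ ENNReal.ofReal (Real.exp (lam * A.card)) := by
  unfold wt
  apply ENNReal.ofReal_le_ofReal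
  apply Real.exp_le_exp.mpr
  apply mul_le_mul_of_nonneg_left _ hl
  calc _ ≤ ∑ x ∈ A, (1:ℝ) := Finset.sum_le_sum (fun x _ => by split_ifs <;> norm_num)
    _ = _ := by simp

lemma wt_eq_one {t : ℕ∞} {ω : ℕ → Cyl d N} (h : ∀ n : ℕ, (n : ℕ∞) < t → ω n ∉ A) :
    wt lam A t ω = 1 := by
  unfold wt
  rw [Finset.sum_eq_zero]
  · simp
  · intro x hx
    rw [if_neg]
    rw [entT_lt]
    rintro ⟨n, hn, hn2⟩
    rw [Set.mem_singleton_iff] at hn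
    exact h n hn2 (hn ▸ hx)

lemma wt_add_le (hl : 0 ≤ lam) (m : ℕ) (s : ℕ∞) (ω : ℕ → Cyl d N) :
    wt lam A (m + s) ω ≤ wt lam A m ω * wt lam A s (shf m ω) := by
  unfold wt
  rw [← ENNReal.ofReal_mul (Real.exp_nonneg _), ← Real.exp_add, ← mul_add, ← Finset.sum_add_distrib]
  apply ENNReal.ofReal_le_ofReal
  apply Real.exp_le_exp.mpr
  apply mul_le_mul_of_nonneg_left _ hl
  apply Finset.sum_le_sum
  intro x _
  by_cases h : entT {x} ω < m + s
  · rw [if_pos h]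
    rw [entT_lt] at h
    obtain ⟨n, hn, hn2⟩ := h
    by_cases hnm : n < m
    · have : entT {x} ω < m := (entT_lt _ _ _).mpr ⟨n, hn, by exact_mod_cast hnm⟩
      rw [if_pos this]
      split_ifs <;> norm_num
    · obtain ⟨p, rfl⟩ := Nat.exists_eq_add_of_le (not_lt.mp hnm)
      have : entT {x} (shf m ω) < s := by
        rw [entT_lt]
        refine ⟨p, by simpa [shf, add_comm] using hn, ?_⟩
        push_cast at hn2
        exact (ENat.add_lt_add_iff_left (ENat.natCast_ne_top m)).mp hn2
      rw [if_pos this]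
      split_ifs <;> norm_num
  · rw [if_neg h]
    apply add_nonneg <;> split_ifs <;> norm_num

lemma wt_dep (m : ℕ) {ω ω' : ℕ → Cyl d N} (h : ∀ i ≤ m, ω i = ω' i) :
    wt lam A m ω = wt lam A m ω' := by
  unfold wt
  congr 3
  apply Finset.sum_congr rfl
  intro x _
  congr 1
  rw [entT_lt, entT_lt, eq_iff_iff]
  apply exists_congr
  intro n
  rw [and_congr_left_iff]
  intro hn
  have : n < m := by exact_mod_cast hn
  rw [h n this.le]

lemma IsST.measurableSet {τ : (ℕ → Cyl d N) → ℕ∞} (h : IsST τ) (n : ℕ) :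
    MeasurableSet {ω | τ ω = n} := by
  have : Dep n (fun ω => τ ω = n) := fun ω ω' hω => propext (h.iff hω)
  exact measurableSet_setOfPred.mpr this.measurable

lemma IsST.measurable_wt {τ : (ℕ → Cyl d N) → ℕ∞} (h : IsST τ) :
    Measurable (fun ω => wt lam A (τ ω) ω) := by
  unfold wt
  apply ENNReal.measurable_ofReal.comp
  apply Real.measurable_exp.comp
  apply Measurable.const_mul
  apply Finset.measurable_sum
  intro x _
  apply Measurable.ite _ measurable_const measurable_const
  have : {ω | entT {x} ω < τ ω} = ⋃ n : ℕ, ({ω | ω n = x} ∩ ⋂ m : ℕ, ⋂ _ : m ≤ n, {ω | τ ω = m}ᶜ) := by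
    ext ω
    simp only [Set.mem_ofPred_eq, Set.mem_iUnion, Set.mem_inter_iff, Set.mem_iInter, entT_lt,
      Set.mem_singleton_iff, Set.mem_compl_iff]
    apply exists_congr
    intro n
    apply and_congr_right
    intro _
    constructor
    · intro h m hm hc
      rw [hc] at h
      have : n < m := by exact_mod_cast h
      omega
    · intro h
      by_contra hc
      have hc := not_lt.mp hc
      obtain ⟨m, hm⟩ := ENat.ne_top_iff_exists.mp (ne_top_of_le_ne_top (ENat.natCast_ne_top n) hc)
      rw [← hm] at hc
      exact h m (by exact_mod_cast hc) hm.symm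
  rw [this]
  refine MeasurableSet.iUnion fun n => (measurableSet_eq_fun (measurable_pi_apply n)
    measurable_const).inter (MeasurableSet.iInter fun m => MeasurableSet.iInter fun _ =>
      (h.measurableSet m).compl)

lemma psi_decomp (hl : 0 ≤ lam) (j : ℤ) (ω : ℕ → Cyl d N) :
    wt lam A (exitT (Btl d N j) ω) ω - 1 ≤
      ∑' n : ℕ, ∑ x ∈ A, (if ω n = x ∧ ∀ i < n, ω i ∈ Btl d N j then 1 else 0) *
        (wt lam A (exitT (Btl d N j) (shf n ω)) (shf n ω) - 1) := by
  by_cases h : ∃ n : ℕ, (n : ℕ∞) < exitT (Btl d N j) ω ∧ ω n ∈ A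
  · let n := Nat.find h
    obtain ⟨h1, h2⟩ : (n : ℕ∞) < exitT (Btl d N j) ω ∧ ω n ∈ A := Nat.find_spec h
    have h3 : ∀ m : ℕ, m < n → ω m ∉ A := by
      intro m hm hA
      exact Nat.find_min h hm ⟨lt_trans (by exact_mod_cast hm) h1, hA⟩
    have hB := (lt_exitT _ _ _).mp h1
    have hT : exitT (Btl d N j) ω ≤ n + exitT (Btl d N j) (shf n ω) := by
      cases hs : exitT (Btl d N j) (shf n ω) with
      | top => simp
      | coe p =>
        unfold exitT at hs ⊢
        rw [entT_eq] at hs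
        apply sInf_le
        exact ⟨p + n, hs.1, by push_cast; ring⟩
    have hT' : wt lam A (exitT (Btl d N j) ω) ω ≤ wt lam A (exitT (Btl d N j) (shf n ω)) (shf n ω) := by
      calc _ ≤ wt lam A (n + exitT (Btl d N j) (shf n ω)) ω := by
            unfold wt
            apply ENNReal.ofReal_le_ofReal
            apply Real.exp_le_exp.mpr
            apply mul_le_mul_of_nonneg_left _ hl
            apply Finset.sum_le_sum
            intro x _
            by_cases hh : entT {x} ω < exitT (Btl d N j) ω
            · rw [if_pos hh, if_pos (hh.trans_le hT)]
            · rw [if_neg hh]; split_ifs <;> norm_num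
        _ ≤ _ := wt_add_le hl _ _ _
        _ = _ := by
          rw [wt_eq_one, one_mul]
          intro m hm
          exact h3 m (by exact_mod_cast hm)
    refine le_trans ?_ (ENNReal.le_tsum n)
    refine le_trans ?_ (Finset.single_le_sum (f := fun x => (if ω n = x ∧ ∀ i < n, ω i ∈ Btl d N j then 1 else 0) *
        (wt lam A (exitT (Btl d N j) (shf n ω)) (shf n ω) - 1)) (fun _ _ => zero_le) h2)
    rw [if_pos ⟨rfl, fun i hi => hB i hi.le⟩, one_mul]
    exact tsub_le_tsub_right hT' 1
  · push Not at h
    rw [wt_eq_one h]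
    simp

lemma W1_decomp (hl : 0 ≤ lam) (j : ℤ) (hA : (↑A : Set (Cyl d N)) ⊆ Bblk d N j) (ω : ℕ → Cyl d N) :
    wt lam A (DD d N j 1 ω) ω - 1 ≤
      ∑' n : ℕ, (if entT (Bblk d N j) ω = n then 1 else 0) *
        (wt lam A (exitT (Btl d N j) (shf n ω)) (shf n ω) - 1) := by
  rw [DD_one]
  unfold oneExc
  cases h : entT (Bblk d N j) ω with
  | top =>
    rw [after_top, wt_eq_one]
    · simp
    · intro n _ hn
      exact (le_entT (Bblk d N j) ω ⊤).mp h.ge n (ENat.natCast_lt_top n) (hA hn)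
  | coe n =>
    rw [after_coe]
    refine le_trans ?_ (ENNReal.le_tsum n)
    rw [if_pos rfl, one_mul]
    apply tsub_le_tsub_right
    refine (wt_add_le hl _ _ _).trans ?_
    rw [wt_eq_one, one_mul]
    intro m hm hmA
    exact (le_entT (Bblk d N j) ω n).mp h.ge m hm (hA hmA)

lemma Wk_decomp (hl : 0 ≤ lam) (j : ℤ) (k : ℕ) (ω : ℕ → Cyl d N) :
    wt lam A (DD d N j (k+1) ω) ω ≤ wt lam A (DD d N j 1 ω) ω +
      ∑' m : ℕ, (if DD d N j 1 ω = m then wt lam A (DD d N j 1 ω) ω else 0) *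
        (wt lam A (DD d N j k (shf m ω)) (shf m ω) - 1) := by
  rw [DD_succ', DD_one]
  cases h : oneExc d N j ω with
  | top => rw [after_top]; exact le_self_add
  | coe m =>
    rw [after_coe]
    refine le_trans ?_ (add_le_add_right (ENNReal.le_tsum m) _)
    rw [if_pos rfl]
    refine (wt_add_le hl _ _ _).trans ?_
    nth_rewrite 2 [← mul_one (wt lam A m ω)]
    rw [← mul_add, add_tsub_cancel_of_le (one_le_wt hl _ _)]

end

end


section
section
variable {d N : ℕ} {lam : ℝ} {A : Finset (Cyl d N)} {Pl : Cyl d N → Measure (ℕ → Cyl d N)}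

/-- indicator of being at `x` at time `n` without leaving `B` before -/
noncomputable def indn (B : Set (Cyl d N)) (x : Cyl d N) (n : ℕ) (ω : ℕ → Cyl d N) : ℝ≥0∞ :=
  if ω n = x ∧ ∀ i < n, ω i ∈ B then 1 else 0

lemma indn_dep (B : Set (Cyl d N)) (x : Cyl d N) (n : ℕ) : Dep n (indn B x n) := by
  intro ω ω' h
  unfold indn
  congr 1
  rw [h n le_rfl, eq_iff_iff, and_congr_right_iff]
  intro _
  exact forall₂_congr (fun i hi => by rw [h i hi.le])

lemma indn_int (hP : IsCylRW d N Pl) (B : Set (Cyl d N)) (x : Cyl d N) (n : ℕ) : ∀ z,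
    ∫⁻ ω, indn B x n ω ∂(Pl z) = (ko d N B)^[n] (fun y => if y = x then 1 else 0) z := by
  have := hP.1
  induction n with
  | zero =>
    intro z
    have : ∀ᵐ ω ∂(Pl z), indn B x 0 ω = if z = x then 1 else 0 := by
      filter_upwards [ae_start hP z] with ω hω
      simp [indn, hω]
    rw [lintegral_congr_ae this]
    simp
  | succ n ih =>
    intro z
    rw [one_step hP z _ (indn_dep B x (n+1)).measurable, Function.iterate_succ_apply']
    unfold ko
    have hc : ∀ ω, indn B x (n+1) (consP z ω) = if z ∈ B then indn B x n ω else 0 := by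
      intro ω
      unfold indn
      by_cases hz : z ∈ B
      · rw [if_pos hz]
        congr 1
        change (ω n = x ∧ _) = _
        rw [eq_iff_iff, and_congr_right_iff]
        intro _
        constructor
        · intro h i hi; exact h (i+1) (by omega)
        · intro h i hi
          cases i with
          | zero => exact hz
          | succ i => exact h i (by omega)
      · rw [if_neg hz, if_neg]
        rintro ⟨_, h⟩
        exact hz (h 0 (by omega))
    simp only [hc]
    split_ifs with hz
    · congr 1
      funext y
      exact ih y
    · simp [av]

lemma indn_mul_int (hP : IsCylRW d N Pl) (B : Set (Cyl d N)) (x : Cyl d N) (n : ℕ)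
    (G : (ℕ → Cyl d N) → ℝ≥0∞) (hG : Measurable G) (z : Cyl d N) :
    ∫⁻ ω, indn B x n ω * G (shf n ω) ∂(Pl z) =
      (ko d N B)^[n] (fun y => if y = x then 1 else 0) z * ∫⁻ ω, G ω ∂(Pl x) := by
  rw [markov hP G hG n _ (indn_dep B x n), ← indn_int hP,
    ← lintegral_mul_const _ (indn_dep B x n).measurable]
  apply lintegral_congr
  intro ω
  unfold indn
  split_ifs with h
  · rw [h.1]
  · simp

/-- `Ψ - 1` -/
noncomputable def Psi (lam : ℝ) (A : Finset (Cyl d N)) (j : ℤ) (ω : ℕ → Cyl d N) : ℝ≥0∞ :=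
  wt lam A (exitT (Btl d N j) ω) ω - 1

lemma measurable_Psi (j : ℤ) : Measurable (Psi lam A j) :=
  (IsST.measurable_wt (isST_entT (Btl d N j)ᶜ)).sub measurable_const

lemma ph_le (hP : IsCylRW d N Pl) (hl : 0 ≤ lam) (j : ℤ) (σ : ℝ≥0∞)
    (hσ : ∀ y, ∫⁻ ω, Psi lam A j ω ∂(Pl y) ≤ σ) (z : Cyl d N) :
    ∫⁻ ω, Psi lam A j ω ∂(Pl z) ≤ (∑ x ∈ A, Gr d N j x z) * σ := by
  calc _ ≤ ∫⁻ ω, ∑' n : ℕ, ∑ x ∈ A, indn (Btl d N j) x n ω * Psi lam A j (shf n ω) ∂(Pl z) :=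
        lintegral_mono (fun ω => psi_decomp hl j ω)
    _ = ∑' n : ℕ, ∑ x ∈ A, ∫⁻ ω, indn (Btl d N j) x n ω * Psi lam A j (shf n ω) ∂(Pl z) := by
        have hm : ∀ n x, Measurable (fun ω => indn (Btl d N j) x n ω * Psi lam A j (shf n ω)) :=
          fun n x => (indn_dep _ x n).measurable.mul ((measurable_Psi j).comp (measurable_shf n))
        rw [lintegral_tsum (fun n => (Finset.measurable_sum _ (fun x _ => hm n x)).aemeasurable)]
        congr 1
        funext n
        rw [lintegral_finsetSum _ (fun x _ => hm n x)]
    _ = ∑ x ∈ A, ∑' n : ℕ, ∫⁻ ω, indn (Btl d N j) x n ω * Psi lam A j (shf n ω) ∂(Pl z) :=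
        Summable.tsum_finsetSum (fun _ _ => ENNReal.summable)
    _ ≤ _ := by
        rw [Finset.sum_mul]
        apply Finset.sum_le_sum
        intro x _
        simp only [indn_mul_int hP _ _ _ _ (measurable_Psi j)]
        rw [ENNReal.tsum_mul_right]
        exact mul_le_mul_right (hσ x) _

lemma ae_nn (hP : IsCylRW d N Pl) (z : Cyl d N) :
    ∀ᵐ ω ∂(Pl z), ∀ n, |(ω (n+1)).2 - (ω n).2| ≤ 1 := by
  rw [ae_all_iff]
  intro n
  let G : (ℕ → Cyl d N) → ℝ≥0∞ := fun ω => if |(ω 1).2 - (ω 0).2| ≤ 1 then 0 else 1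
  have hGd : Dep 1 G := by
    intro ω ω' h
    simp only [G]
    rw [h 1 le_rfl, h 0 (by omega)]
  have hG := hGd.measurable
  have hG0 : ∀ y, ∫⁻ ω, G ω ∂(Pl y) = 0 := by
    intro y
    have hz : ∀ w : Cyl d N, |w.2 - y.2| ≤ 1 → ∫⁻ ω, G (consP y ω) ∂(Pl w) = 0 := by
      intro w hw
      have : ∀ᵐ ω ∂(Pl w), G (consP y ω) = 0 := by
        filter_upwards [ae_start hP w] with ω hω
        simp only [G]
        rw [if_pos]
        change |(ω 0).2 - y.2| ≤ 1
        rwa [hω]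
      rw [lintegral_congr_ae this]; simp
    have hs : ∀ k, |(stp d N k).2| ≤ 1 := by
      intro k
      induction k using Fin.lastCases with
      | last => rw [stp_last_snd]; simp
      | cast i => rw [stp_castSucc_snd]; simp
    rw [one_step hP y G hG]
    unfold av
    rw [Finset.sum_eq_zero, mul_zero]
    intro k _
    dsimp only
    rw [hz _ (by simpa using hs k), hz _ (by simpa using hs k), add_zero]
  have h1 := markov hP G hG n (fun _ => 1) (fun _ _ _ => rfl) z
  simp only [one_mul, hG0, lintegral_zero] at h1
  replace h1 := (lintegral_eq_zero_iff (f := fun ω => G (shf n ω)) (hG.comp (measurable_shf n))).mp h1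
  filter_upwards [h1] with ω hω
  by_contra hc
  have : G (shf n ω) = 1 := by
    simp only [G]
    rw [if_neg]
    have e1 : shf n ω 1 = ω (n+1) := congrArg ω (add_comm 1 n)
    have e0 : shf n ω 0 = ω n := congrArg ω (zero_add n)
    rw [e1, e0]
    exact hc
  change G (shf n ω) = 0 at hω
  rw [this] at hω
  exact one_ne_zero hω

lemma W1_int (hP : IsCylRW d N Pl) (hl : 0 ≤ lam) (j : ℤ) (hA : (↑A : Set (Cyl d N)) ⊆ Bblk d N j)
    (z : Cyl d N) :
    ∫⁻ ω, (wt lam A (DD d N j 1 ω) ω - 1) ∂(Pl z) ≤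
      ∫⁻ ω, ∑' n : ℕ, (if entT (Bblk d N j) ω = n then 1 else 0) *
        ∫⁻ ω', Psi lam A j ω' ∂(Pl (ω n)) ∂(Pl z) := by
  have hdep : ∀ n : ℕ, Dep n (fun ω : ℕ → Cyl d N => if entT (Bblk d N j) ω = n then (1:ℝ≥0∞) else 0) := by
    intro n ω ω' h
    simp only [(isST_entT (Bblk d N j)).iff h]
  calc _ ≤ ∫⁻ ω, ∑' n : ℕ, (if entT (Bblk d N j) ω = n then 1 else 0) *
        Psi lam A j (shf n ω) ∂(Pl z) := lintegral_mono (fun ω => W1_decomp hl j hA ω)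
    _ = ∑' n : ℕ, ∫⁻ ω, (if entT (Bblk d N j) ω = n then 1 else 0) *
        Psi lam A j (shf n ω) ∂(Pl z) :=
      lintegral_tsum (fun n => ((hdep n).measurable.mul
        ((measurable_Psi j).comp (measurable_shf n))).aemeasurable)
    _ = ∑' n : ℕ, ∫⁻ ω, (if entT (Bblk d N j) ω = n then 1 else 0) *
        ∫⁻ ω', Psi lam A j ω' ∂(Pl (ω n)) ∂(Pl z) := by
      congr 1
      funext n
      exact markov hP _ (measurable_Psi j) n _ (hdep n) z
    _ = _ := (lintegral_tsum (fun n => ((hdep n).measurable.mul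
        (measurable_kernel _ n)).aemeasurable)).symm

lemma W1_int_in (hP : IsCylRW d N Pl) (hl : 0 ≤ lam) (j : ℤ)
    (hA : (↑A : Set (Cyl d N)) ⊆ Bblk d N j) (z : Cyl d N) (hz : z ∈ Bblk d N j) :
    ∫⁻ ω, (wt lam A (DD d N j 1 ω) ω - 1) ∂(Pl z) ≤ ∫⁻ ω, Psi lam A j ω ∂(Pl z) := by
  have := hP.1
  refine (W1_int hP hl j hA z).trans ?_
  have : ∀ᵐ ω ∂(Pl z), (∑' n : ℕ, (if entT (Bblk d N j) ω = n then 1 else 0) *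
        ∫⁻ ω', Psi lam A j ω' ∂(Pl (ω n))) = ∫⁻ ω', Psi lam A j ω' ∂(Pl z) := by
    filter_upwards [ae_start hP z] with ω hω
    have h0 : entT (Bblk d N j) ω = (0:ℕ) := by
      rw [entT_eq]; exact ⟨by rwa [hω], fun i hi => absurd hi (by omega)⟩
    rw [tsum_eq_single 0]
    · rw [if_pos h0, one_mul, hω]
    · intro n hn
      rw [if_neg, zero_mul]
      rw [h0]
      intro h
      exact hn (by exact_mod_cast h.symm)
  rw [lintegral_congr_ae this]
  simp

lemma W1_int_out (hP : IsCylRW d N Pl) (hl : 0 ≤ lam) (j : ℤ)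
    (hA : (↑A : Set (Cyl d N)) ⊆ Bblk d N j) (b : ℝ≥0∞)
    (hb : ∀ y : Cyl d N, y.2 = (j-1)*N ∨ y.2 = (j+1)*N → ∫⁻ ω, Psi lam A j ω ∂(Pl y) ≤ b)
    (z : Cyl d N) (hz : z ∉ Bblk d N j) :
    ∫⁻ ω, (wt lam A (DD d N j 1 ω) ω - 1) ∂(Pl z) ≤ b := by
  have := hP.1
  refine (W1_int hP hl j hA z).trans ?_
  have : ∀ᵐ ω ∂(Pl z), (∑' n : ℕ, (if entT (Bblk d N j) ω = n then 1 else 0) *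
        ∫⁻ ω', Psi lam A j ω' ∂(Pl (ω n))) ≤ b := by
    filter_upwards [ae_start hP z, ae_nn hP z] with ω hω hnn
    cases h : entT (Bblk d N j) ω with
    | top => simp
    | coe n =>
      rw [tsum_eq_single n]
      · rw [if_pos rfl, one_mul]
        rw [entT_eq] at h
        obtain ⟨h1, h2⟩ := h
        cases n with
        | zero => rw [hω] at h1; exact absurd h1 hz
        | succ n =>
          have h3 := h2 n (by omega)
          have h4 := abs_le.mp (hnn n)
          apply hb
          simp only [Bblk, Set.mem_ofPred_eq, not_and_or, not_le] at h1 h3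
          omega
      · intro m hm
        rw [if_neg, zero_mul]
        intro h
        exact hm (by exact_mod_cast h.symm)
  refine (lintegral_mono_ae this).trans ?_
  simp

lemma int_sub_one (hP : IsCylRW d N Pl) (hl : 0 ≤ lam) {τ : (ℕ → Cyl d N) → ℕ∞} (z : Cyl d N) :
    ∫⁻ ω, wt lam A (τ ω) ω ∂(Pl z) = 1 + ∫⁻ ω, (wt lam A (τ ω) ω - 1) ∂(Pl z) := by
  have := hP.1
  have h : ∀ ω, wt lam A (τ ω) ω = 1 + (wt lam A (τ ω) ω - 1) :=
    fun ω => (add_tsub_cancel_of_le (one_le_wt hl _ _)).symm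
  conv_lhs => enter [2, ω]; rw [h ω]
  rw [lintegral_add_left measurable_const]
  simp

lemma Bblk_sub_Btl (hN : 1 ≤ N) (j : ℤ) : Bblk d N j ⊆ Btl d N j := by
  intro x hx
  simp only [Bblk, Btl, Set.mem_ofPred_eq] at hx ⊢
  constructor <;> nlinarith [hx.1, hx.2, hN]

lemma DD_one_notMem (j : ℤ) (ω : ℕ → Cyl d N) (m : ℕ) (h : DD d N j 1 ω = m) :
    ω m ∉ Btl d N j := by
  rw [DD_one] at h
  unfold oneExc at h
  cases hs : entT (Bblk d N j) ω with
  | top => rw [hs, after_top] at h; exact absurd h.symm (by simp)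
  | coe n =>
    rw [hs, after_coe] at h
    cases hr : exitT (Btl d N j) (shf n ω) with
    | top => rw [hr] at h; exact absurd h.symm (by simp)
    | coe p =>
      rw [hr] at h
      have h4 : n + p = m := by exact_mod_cast h
      unfold exitT at hr
      rw [entT_eq] at hr
      rw [← h4, add_comm]
      exact hr.1

lemma Wk_step (hP : IsCylRW d N Pl) (hl : 0 ≤ lam) (j : ℤ) (k : ℕ) (K : ℝ≥0∞) (hK : 1 ≤ K)
    (h : ∀ y, y ∉ Btl d N j → ∫⁻ ω, wt lam A (DD d N j k ω) ω ∂(Pl y) ≤ K) (z : Cyl d N) :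
    ∫⁻ ω, wt lam A (DD d N j (k+1) ω) ω ∂(Pl z) ≤ (∫⁻ ω, wt lam A (DD d N j 1 ω) ω ∂(Pl z)) * K := by
  have := hP.1
  have hdep : ∀ m : ℕ, Dep m (fun ω : ℕ → Cyl d N =>
      if DD d N j 1 ω = m then wt lam A (DD d N j 1 ω) ω else 0) := by
    intro m ω ω' h
    simp only [(isST_DD j 1).iff h]
    split_ifs with h1
    · rw [h1, ((isST_DD j 1).iff h).mpr h1, wt_dep m h]
    · rfl
  have hm1 : Measurable (fun ω : ℕ → Cyl d N => wt lam A (DD d N j 1 ω) ω) := (isST_DD j 1).measurable_wt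
  have hG : Measurable (fun ω : ℕ → Cyl d N => wt lam A (DD d N j k ω) ω - 1) :=
    (isST_DD j k).measurable_wt.sub measurable_const
  have h' : ∀ y, y ∉ Btl d N j → ∫⁻ ω, (wt lam A (DD d N j k ω) ω - 1) ∂(Pl y) ≤ K - 1 := by
    intro y hy
    have := h y hy
    rw [int_sub_one hP hl] at this
    exact ENNReal.le_sub_of_add_le_left ENNReal.one_ne_top this
  calc _ ≤ ∫⁻ ω, (wt lam A (DD d N j 1 ω) ω +
      ∑' m : ℕ, (if DD d N j 1 ω = m then wt lam A (DD d N j 1 ω) ω else 0) *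
        (wt lam A (DD d N j k (shf m ω)) (shf m ω) - 1)) ∂(Pl z) :=
        lintegral_mono (fun ω => Wk_decomp hl j k ω)
    _ = ∫⁻ ω, wt lam A (DD d N j 1 ω) ω ∂(Pl z) +
      ∑' m : ℕ, ∫⁻ ω, (if DD d N j 1 ω = m then wt lam A (DD d N j 1 ω) ω else 0) *
        (wt lam A (DD d N j k (shf m ω)) (shf m ω) - 1) ∂(Pl z) := by
        rw [lintegral_add_left hm1, lintegral_tsum]
        exact fun m => ((hdep m).measurable.mul (hG.comp (measurable_shf m))).aemeasurable
    _ ≤ ∫⁻ ω, wt lam A (DD d N j 1 ω) ω ∂(Pl z) +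
      ∑' m : ℕ, ∫⁻ ω, (if DD d N j 1 ω = m then wt lam A (DD d N j 1 ω) ω else 0) * (K - 1) ∂(Pl z) := by
        apply add_le_add_right
        apply ENNReal.tsum_le_tsum
        intro m
        rw [markov hP _ hG m _ (hdep m)]
        apply lintegral_mono
        intro ω
        dsimp only
        split_ifs with h1
        · exact mul_le_mul_right (h' _ (DD_one_notMem j ω m h1)) _
        · simp
    _ = ∫⁻ ω, wt lam A (DD d N j 1 ω) ω ∂(Pl z) +
        (∫⁻ ω, ∑' m : ℕ, (if DD d N j 1 ω = m then wt lam A (DD d N j 1 ω) ω else 0) ∂(Pl z)) * (K - 1) := by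
        congr 1
        rw [lintegral_tsum (fun m => (hdep m).measurable.aemeasurable), ← ENNReal.tsum_mul_right]
        congr 1
        funext m
        rw [lintegral_mul_const _ (hdep m).measurable]
    _ ≤ ∫⁻ ω, wt lam A (DD d N j 1 ω) ω ∂(Pl z) +
        (∫⁻ ω, wt lam A (DD d N j 1 ω) ω ∂(Pl z)) * (K - 1) := by
        apply add_le_add_right
        apply mul_le_mul_left
        apply lintegral_mono
        intro ω
        dsimp only
        cases h : DD d N j 1 ω with
        | top => simp
        | coe n =>
          rw [tsum_eq_single n]
          · simp
          · intro m hm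
            rw [if_neg]
            intro h
            exact hm (by exact_mod_cast h.symm)
    _ = _ := by
        nth_rewrite 1 [← mul_one (∫⁻ ω, wt lam A (DD d N j 1 ω) ω ∂(Pl z))]
        rw [← mul_add, add_tsub_cancel_of_le hK]

lemma Wk_out (hP : IsCylRW d N Pl) (hl : 0 ≤ lam) (hN : 1 ≤ N) (j : ℤ)
    (hA : (↑A : Set (Cyl d N)) ⊆ Bblk d N j) (b : ℝ≥0∞)
    (hb : ∀ y : Cyl d N, y.2 = (j-1)*N ∨ y.2 = (j+1)*N → ∫⁻ ω, Psi lam A j ω ∂(Pl y) ≤ b)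
    (k : ℕ) : ∀ z, z ∉ Btl d N j → ∫⁻ ω, wt lam A (DD d N j k ω) ω ∂(Pl z) ≤ (1 + b)^k := by
  have := hP.1
  induction k with
  | zero =>
    intro z _
    have : ∀ ω, wt lam A (DD d N j 0 ω) ω = 1 := fun ω => wt_eq_one (by
      intro n hn; simp [DD] at hn)
    simp [this]
  | succ k ih =>
    intro z hz
    refine (Wk_step hP hl j k _ (one_le_pow_of_one_le' le_self_add k) ih z).trans ?_
    rw [pow_succ, mul_comm]
    apply mul_le_mul_right
    rw [int_sub_one hP hl]
    apply add_le_add_right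
    exact W1_int_out hP hl j hA b hb z (fun h => hz (Bblk_sub_Btl hN j h))

end

end


section
section
variable {d N : ℕ} {lam : ℝ} {A : Finset (Cyl d N)} {Pl : Cyl d N → Measure (ℕ → Cyl d N)}

lemma Cblk_sub_Bblk (j : ℤ) : Cblk d N j ⊆ Bblk d N j := by
  intro x hx
  simp only [Cblk, Bblk, Set.mem_ofPred_eq] at hx ⊢
  have hN : (0:ℝ) ≤ N := Nat.cast_nonneg N
  constructor
  · have : (((j-1) * (N:ℤ) : ℤ) : ℝ) ≤ (x.2 : ℝ) := by push_cast; nlinarith [hx.1]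
    exact_mod_cast this
  · have : (x.2 : ℝ) ≤ (((j+1) * (N:ℤ) : ℤ) : ℝ) := by push_cast; nlinarith [hx.2]
    exact_mod_cast this

lemma Gr_far (hd : 1 ≤ d) (hN : 1 ≤ N) (j : ℤ) (x : Cyl d N) (hx : x ∈ Cblk d N j) (z : Cyl d N)
    (hz : z.2 = (j-1)*N ∨ z.2 = (j+1)*N) :
    (N:ℝ≥0∞)^(d-1) * Gr d N j x z ≤ ((4^(d+1) * C0 d : ℕ) : ℝ≥0∞) := by
  have hxB := Bblk_sub_Btl hN j (Cblk_sub_Bblk j hx)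
  let r := (N+3)/4
  have hr1 : 1 ≤ r := by simp only [r]; omega
  have hr2 : r ≤ N := by simp only [r]; omega
  have hr3 : N ≤ 4 * r := by simp only [r]; omega
  have hr4 : 4 * r ≤ N + 3 := by simp only [r]; omega
  have hdist : (N:ℤ) ≤ 4 * |z.2 - x.2| := by
    simp only [Cblk, Set.mem_ofPred_eq] at hx
    have : (N:ℝ) ≤ 4 * |(z.2:ℝ) - x.2| := by
      rcases hz with h | h
      · have h' : (z.2:ℝ) = (j-1)*N := by rw [h]; push_cast; ring
        rw [h']
        have := neg_le_abs (((j:ℝ)-1)*N - x.2)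
        nlinarith [hx.1]
      · have h' : (z.2:ℝ) = (j+1)*N := by rw [h]; push_cast; ring
        rw [h']
        have := le_abs_self (((j:ℝ)+1)*N - x.2)
        nlinarith [hx.2]
    exact_mod_cast this
  have hG := Gr_bound j hN x hxB r hr1 hr2 z (by omega)
  have hN0 : (N:ℝ≥0∞)^2 ≠ 0 := by positivity
  have hNt : (N:ℝ≥0∞)^2 ≠ ⊤ := ENNReal.pow_ne_top (ENNReal.natCast_ne_top N)
  rw [← ENNReal.mul_le_mul_iff_right hN0 hNt]
  calc (N:ℝ≥0∞)^2 * ((N:ℝ≥0∞)^(d-1) * Gr d N j x z) = (N:ℝ≥0∞)^(d+1) * Gr d N j x z := by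
        rw [← mul_assoc, ← pow_add]; congr 2; omega
    _ ≤ (4 * r : ℝ≥0∞)^(d+1) * Gr d N j x z := by
        gcongr; exact_mod_cast hr3
    _ = 4^(d+1) * ((r:ℝ≥0∞)^(d+1) * Gr d N j x z) := by rw [mul_pow, mul_assoc]
    _ ≤ 4^(d+1) * ((C0 d * N^2 : ℕ) : ℝ≥0∞) := by gcongr
    _ = _ := by push_cast; ring

lemma card_B0 (hN : 1 ≤ N) : ∑' z : Cyl d N, (if z ∈ Bblk d N 0 then (1:ℝ≥0∞) else 0)
    = (N : ℝ≥0∞) ^ d * (2 * N + 1) := by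
  have : NeZero N := ⟨by omega⟩
  rw [ENNReal.tsum_prod (f := fun (a : Fin d → ZMod N) (b : ℤ) =>
    if ((a, b) : Cyl d N) ∈ Bblk d N 0 then (1:ℝ≥0∞) else 0)]
  have h : ∀ a : Fin d → ZMod N, ∑' b : ℤ, (if ((a, b) : Cyl d N) ∈ Bblk d N 0 then (1:ℝ≥0∞) else 0) = 2 * N + 1 := by
    intro a
    rw [tsum_eq_sum (s := Finset.Icc (-(N:ℤ)) N)]
    · rw [Finset.sum_congr rfl (g := fun _ => (1:ℝ≥0∞))]
      · simp only [Finset.sum_const, Int.card_Icc, nsmul_eq_mul, mul_one]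
        have : ((N:ℤ) + 1 - -(N:ℤ)).toNat = 2 * N + 1 := by omega
        rw [this]; push_cast; rfl
      · intro b hb
        rw [Finset.mem_Icc] at hb
        rw [if_pos]
        simp only [Bblk, Set.mem_ofPred_eq]
        constructor <;> linarith [hb.1, hb.2]
    · intro b hb
      rw [Finset.mem_Icc] at hb
      rw [if_neg]
      simp only [Bblk, Set.mem_ofPred_eq]
      intro hc
      exact hb ⟨by linarith [hc.1], by linarith [hc.2]⟩
  simp only [h]
  rw [tsum_fintype]
  simp [ZMod.card]
  ring

lemma main_bound (hd : 1 ≤ d) (hN : 1 ≤ N) (hP : IsCylRW d N Pl) (hl : 0 ≤ lam) (j : ℤ)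
    (hA : (↑A : Set (Cyl d N)) ⊆ Cblk d N j) (σ : ℝ≥0∞)
    (hσ : ∀ y, ∫⁻ ω, Psi lam A j ω ∂(Pl y) ≤ σ) (k : ℕ) :
    ∫⁻ ω, wt lam A (DD d N j (k+1) ω) ω ∂(lawP d N Pl) ≤
      (1 + ((4^(d+1) * C0 d + 4 * (d+1) : ℕ) : ℝ≥0∞) * A.card * σ / (N:ℝ≥0∞)^(d-1))^(k+1) := by
  have hprob := hP.1
  have hAB : (↑A : Set (Cyl d N)) ⊆ Bblk d N j := hA.trans (Cblk_sub_Bblk j)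
  have hp0 : (N:ℝ≥0∞)^(d-1) ≠ 0 := by positivity
  have hpt : (N:ℝ≥0∞)^(d-1) ≠ ⊤ := ENNReal.pow_ne_top (ENNReal.natCast_ne_top N)
  set V : ℝ≥0∞ := (N : ℝ≥0∞) ^ d * (2 * N + 1) with hV
  have hV0 : V ≠ 0 := by positivity
  have hVt : V ≠ ⊤ := ENNReal.mul_ne_top (ENNReal.pow_ne_top (ENNReal.natCast_ne_top N))
    (by exact_mod_cast ENNReal.natCast_ne_top (2*N+1))
  set b : ℝ≥0∞ := ((4^(d+1) * C0 d : ℕ) : ℝ≥0∞) * A.card * σ / (N:ℝ≥0∞)^(d-1) with hbdef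
  set b2 : ℝ≥0∞ := ((4 * (d+1) : ℕ) : ℝ≥0∞) * A.card * σ / (N:ℝ≥0∞)^(d-1) with hb2def
  have hbb : ((4^(d+1) * C0 d + 4 * (d+1) : ℕ) : ℝ≥0∞) * A.card * σ / (N:ℝ≥0∞)^(d-1) = b + b2 := by
    rw [hbdef, hb2def, ← ENNReal.add_div, ← add_mul, ← add_mul]; push_cast; rfl
  rw [hbb]
  have hb : ∀ y : Cyl d N, y.2 = (j-1)*N ∨ y.2 = (j+1)*N → ∫⁻ ω, Psi lam A j ω ∂(Pl y) ≤ b := by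
    intro y hy
    refine (ph_le hP hl j σ hσ y).trans ?_
    rw [hbdef, ENNReal.le_div_iff_mul_le (Or.inl hp0) (Or.inl hpt), mul_right_comm]
    refine mul_le_mul_left ?_ σ
    rw [mul_comm, Finset.mul_sum, mul_comm _ (A.card : ℝ≥0∞), ← nsmul_eq_mul]
    exact Finset.sum_le_card_nsmul _ _ _ (fun x hx => Gr_far hd hN j x (hA hx) y hy)
  have hout := Wk_out hP hl hN j hAB b hb
  have hW1 : ∀ z, ∫⁻ ω, wt lam A (DD d N j 1 ω) ω ∂(Pl z) ≤ 1 + b + (∑ x ∈ A, Gr d N j x z) * σ := by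
    intro z
    rw [int_sub_one hP hl, add_assoc]
    gcongr
    by_cases hz : z ∈ Bblk d N j
    · exact ((W1_int_in hP hl j hAB z hz).trans (ph_le hP hl j σ hσ z)).trans le_add_self
    · exact (W1_int_out hP hl j hAB b hb z hz).trans le_self_add
  have hWk : ∀ z, ∫⁻ ω, wt lam A (DD d N j (k+1) ω) ω ∂(Pl z) ≤
      (1 + b + (∑ x ∈ A, Gr d N j x z) * σ) * (1+b)^k := by
    intro z
    refine (Wk_step hP hl j k _ (one_le_pow_of_one_le' le_self_add k) (hout k) z).trans ?_
    gcongr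
    exact hW1 z
  have hsum : ∑' z : Cyl d N, (∑ x ∈ A, Gr d N j x z) ≤ A.card * ((4 * (d+1) * N^2 : ℕ) : ℝ≥0∞) := by
    rw [Summable.tsum_finsetSum (fun _ _ => ENNReal.summable), ← nsmul_eq_mul]
    exact Finset.sum_le_card_nsmul _ _ _ (fun x hx => Gr_sum j x (Bblk_sub_Btl hN j (hAB hx)))
  unfold lawP
  rw [lintegral_smul_measure, lintegral_sum_measure, ← hV, smul_eq_mul]
  have hite : ∀ z : Cyl d N, ∫⁻ ω, wt lam A (DD d N j (k+1) ω) ω ∂(if z ∈ Bblk d N 0 then Pl z else 0)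
      ≤ ((if z ∈ Bblk d N 0 then (1:ℝ≥0∞) else 0) * (1 + b) + (∑ x ∈ A, Gr d N j x z) * σ) * (1+b)^k := by
    intro z
    split_ifs
    · rw [one_mul]; exact hWk z
    · simp
  have hlast : V⁻¹ * (A.card * ((4 * (d+1) * N^2 : ℕ) : ℝ≥0∞) * σ) ≤ b2 := by
    rw [mul_comm, ← div_eq_mul_inv, hb2def]
    rw [ENNReal.div_le_iff hV0 hVt, ← ENNReal.mul_div_right_comm,
      ENNReal.le_div_iff_mul_le (Or.inl hp0) (Or.inl hpt)]
    have hVN : (N:ℝ≥0∞)^2 * (N:ℝ≥0∞)^(d-1) ≤ V := by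
      rw [← pow_add, hV, show 2 + (d-1) = d + 1 by omega, pow_succ]
      gcongr
      exact_mod_cast (by omega : N ≤ 2 * N + 1)
    calc _ = ((4 * (d+1) : ℕ) : ℝ≥0∞) * A.card * σ * ((N:ℝ≥0∞)^2 * (N:ℝ≥0∞)^(d-1)) := by
          push_cast; ring
      _ ≤ _ := by gcongr
  calc _ ≤ V⁻¹ * ∑' z : Cyl d N, ((if z ∈ Bblk d N 0 then (1:ℝ≥0∞) else 0) * (1 + b)
        + (∑ x ∈ A, Gr d N j x z) * σ) * (1+b)^k := by
        gcongr with z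
        exact hite z
    _ = (V⁻¹ * V * (1 + b) + V⁻¹ * ((∑' z : Cyl d N, ∑ x ∈ A, Gr d N j x z) * σ)) * (1+b)^k := by
        rw [ENNReal.tsum_mul_right, ENNReal.tsum_add, ENNReal.tsum_mul_right, ENNReal.tsum_mul_right,
          card_B0 hN, ← hV]
        ring
    _ ≤ ((1 + b) + b2) * (1+b)^k := by
        rw [ENNReal.inv_mul_cancel hV0 hVt, one_mul]
        gcongr
        refine le_trans ?_ hlast
        gcongr
    _ ≤ (1 + (b + b2)) * (1 + (b+b2))^k := by
        rw [add_assoc]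
        gcongr
        exact le_self_add
    _ = _ := by rw [pow_succ, mul_comm]

lemma phi_spec (hP : IsCylRW d N Pl) (hl : 0 ≤ lam) (j : ℤ) (y : Cyl d N) :
    ∫⁻ ω, wt lam A (exitT (Btl d N j) ω) ω ∂(Pl y) = ENNReal.ofReal (phi d N Pl j lam A y) ∧
    phi d N Pl j lam A y ≤ Real.exp (lam * A.card) ∧ 1 ≤ phi d N Pl j lam A y := by
  have := hP.1
  have hm : Measurable (fun ω : ℕ → Cyl d N => wt lam A (exitT (Btl d N j) ω) ω) :=
    IsST.measurable_wt (isST_entT (Btl d N j)ᶜ)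
  have hle : ∫⁻ ω, wt lam A (exitT (Btl d N j) ω) ω ∂(Pl y) ≤ ENNReal.ofReal (Real.exp (lam * A.card)) := by
    refine (lintegral_mono (fun ω => wt_le hl _ ω)).trans ?_
    simp
  have hge : 1 ≤ ∫⁻ ω, wt lam A (exitT (Btl d N j) ω) ω ∂(Pl y) := by
    refine le_trans ?_ (lintegral_mono (fun ω => one_le_wt hl _ ω))
    simp
  have hne := ne_top_of_le_ne_top ENNReal.ofReal_ne_top hle
  have hphi : phi d N Pl j lam A y = (∫⁻ ω, wt lam A (exitT (Btl d N j) ω) ω ∂(Pl y)).toReal := by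
    unfold phi
    rw [integral_eq_lintegral_of_nonneg_ae]
    · rfl
    · exact Filter.Eventually.of_forall (fun ω => Real.exp_nonneg _)
    · have h2 := hm.ennreal_toReal
      refine Measurable.aestronglyMeasurable ?_
      convert h2 using 2 with ω
      unfold wt
      rw [ENNReal.toReal_ofReal (Real.exp_nonneg _)]
  refine ⟨?_, ?_, ?_⟩
  · rw [hphi, ENNReal.ofReal_toReal hne]
  · rw [hphi]
    exact ENNReal.toReal_le_of_le_ofReal (Real.exp_nonneg _) hle
  · rw [hphi]
    have := ENNReal.toReal_mono hne hge
    simpa using this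

lemma sigma_spec (hP : IsCylRW d N Pl) (hl : 0 ≤ lam) (j : ℤ) :
    1 ≤ phiSup d N Pl j lam A ∧
    ∀ y, ∫⁻ ω, Psi lam A j ω ∂(Pl y) ≤ ENNReal.ofReal (phiSup d N Pl j lam A - 1) := by
  have hb : BddAbove (Set.range (fun z => phi d N Pl j lam A z)) :=
    ⟨_, by rintro _ ⟨z, rfl⟩; exact (phi_spec hP hl j z).2.1⟩
  refine ⟨(phi_spec hP hl j 0).2.2.trans (le_ciSup hb 0), ?_⟩
  intro y
  have h := (phi_spec (A := A) hP hl j y).1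
  rw [int_sub_one hP hl] at h
  have h2 : 1 + ∫⁻ ω, Psi lam A j ω ∂(Pl y) ≤ ENNReal.ofReal (phiSup d N Pl j lam A) :=
    h.le.trans (ENNReal.ofReal_le_ofReal (le_ciSup hb y))
  rw [ENNReal.ofReal_sub _ zero_le_one, ENNReal.ofReal_one]
  exact ENNReal.le_sub_of_add_le_left ENNReal.one_ne_top h2

end

end

/-- **(1.21).** For `d ≥ 3` there is a constant `c` depending only on `d` such that for
every `λ > 0`, `N ≥ 2`, `u > 0` with `u N^{d-1} ≥ 1`, `j ∈ ℤ` and nonempty `A ⊆ C_j`,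
`E[exp(λ Σ_{x∈A} 1{H_x < D^j_{uN^{d-1}}})] ≤ exp(c u |A| (‖φ_j‖_∞ - 1))`. -/
theorem statement_15 (d : ℕ) (hd : 3 ≤ d) :
    ∃ c : ℝ, 0 < c ∧
      ∀ lam : ℝ, 0 < lam → ∀ N : ℕ, 2 ≤ N →
      ∀ u : ℝ, 0 < u → 1 ≤ u * (N : ℝ) ^ (d - 1) →
      ∀ Pl : Cyl d N → Measure (ℕ → Cyl d N), IsCylRW d N Pl →
      ∀ j : ℤ, ∀ A : Finset (Cyl d N), A.Nonempty → (↑A : Set (Cyl d N)) ⊆ Cblk d N j →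
        (∫ ω, Real.exp (lam * ∑ x ∈ A,
            if entT {x} ω < DD d N j ⌊u * (N : ℝ) ^ (d - 1)⌋₊ ω then (1 : ℝ) else 0)
          ∂(lawP d N Pl))
          ≤ Real.exp (c * u * A.card * (phiSup d N Pl j lam A - 1)) := by
  set C : ℕ := 4^(d+1) * C0 d + 4 * (d+1) with hC
  refine ⟨(C : ℝ), by rw [hC]; positivity, ?_⟩
  intro lam hlam N hN u hu huN Pl hP j A hAne hA
  obtain ⟨hs1, hs2⟩ := sigma_spec (A := A) hP hlam.le j
  set s : ℝ := phiSup d N Pl j lam A - 1 with hs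
  have hs0 : 0 ≤ s := by linarith
  set n : ℕ := ⌊u * (N : ℝ) ^ (d - 1)⌋₊ with hn
  have hn1 : 1 ≤ n := by rw [hn]; exact Nat.le_floor (by simpa using huN)
  obtain ⟨k, hk⟩ : ∃ k, n = k + 1 := ⟨n - 1, by omega⟩
  have hnu : (n:ℝ) ≤ u * (N : ℝ) ^ (d - 1) := Nat.floor_le (by linarith)
  have hmain := main_bound (by omega) (by omega) hP hlam.le j hA _ hs2 k
  rw [← hk, ← hC] at hmain
  have hNp : (0:ℝ) < (N:ℝ)^(d-1) := by positivity
  have hconv : (1 + (C : ℝ≥0∞) * A.card * ENNReal.ofReal s / (N:ℝ≥0∞)^(d-1))^n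
      = ENNReal.ofReal ((1 + (C:ℝ) * A.card * s / (N:ℝ)^(d-1))^n) := by
    rw [ENNReal.ofReal_pow (by positivity), ENNReal.ofReal_add zero_le_one (by positivity),
      ENNReal.ofReal_one, ENNReal.ofReal_div_of_pos hNp, ENNReal.ofReal_mul (by positivity),
      ENNReal.ofReal_mul (by positivity), ENNReal.ofReal_natCast, ENNReal.ofReal_natCast,
      ENNReal.ofReal_pow (by positivity), ENNReal.ofReal_natCast]
  rw [hconv] at hmain
  have hfin : (1 + (C:ℝ) * A.card * s / (N:ℝ)^(d-1))^n ≤ Real.exp ((C:ℝ) * u * A.card * s) := by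
    calc _ ≤ (Real.exp ((C:ℝ) * A.card * s / (N:ℝ)^(d-1)))^n := by
          gcongr
          rw [add_comm]; exact Real.add_one_le_exp _
      _ = Real.exp (n * ((C:ℝ) * A.card * s / (N:ℝ)^(d-1))) := by rw [← Real.exp_nat_mul]
      _ ≤ Real.exp (u * (N : ℝ) ^ (d - 1) * ((C:ℝ) * A.card * s / (N:ℝ)^(d-1))) := by gcongr
      _ = _ := by congr 1; field_simp
  refine le_trans ?_ hfin
  by_cases hIntegr : Integrable (fun ω => Real.exp (lam * ∑ x ∈ A,
            if entT {x} ω < DD d N j n ω then (1 : ℝ) else 0)) (lawP d N Pl)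
  · rw [integral_eq_lintegral_of_nonneg_ae (Filter.Eventually.of_forall (fun ω => Real.exp_nonneg _))
      hIntegr.aestronglyMeasurable]
    exact ENNReal.toReal_le_of_le_ofReal (by positivity) hmain
  · rw [integral_undef hIntegr]; positivity

end DiscCyl
end
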